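/- Let k ≥ 3 be an odd integer and let H be a connected graph on n ≥ (10k)⁴ vertices whose average degree 2·e(H)/n is at most 2·(1 + (8k)^{−2}). Then R(C_k, H) = 2n − 1. -/

import Mathlib

/-- `G` has a copy in `C`: there is an injective graph homomorphism from `G` to `C`,
i.e. `C` contains `G` as a (not necessarily induced) subgraph. -/
def HasCopy {α β : Type*} (G : SimpleGraph α) (C : SimpleGraph β) : Prop :=
  ∃ f : G →g C, Function.Injective f

/-- The Ramsey number `R(G, H)`: the least `N` such that every red-blue colouring of the
edges of `K_N` (encoded by the graph `C` of red edges) contains a red copy of `G` or a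
blue copy of `H`. -/
noncomputable def ramseyNumber {α β : Type*} (G : SimpleGraph α) (H : SimpleGraph β) : ℕ :=
  sInf {N : ℕ | ∀ C : SimpleGraph (Fin N), HasCopy G C ∨ HasCopy H Cᶜ}

/-!
Fix a colouring of a complete graph on `2n - 1` vertices whose red graph is `C_k`-free, where `n` is
the number of vertices of `H`. A red neighbourhood contains no red path on `k - 1` vertices, so it
is sparse in red; and, `k` being odd, at least `k` vertices of which any two have `k` common red
neighbours in a fixed set form a blue clique. A blue clique on `n` vertices already contains `H`, so
one may assume that there is none.

Let `ℓ` be the truncated difference `e(H) - n`. The blue copy of `H` is found by induction on a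
connected set `S` of vertices of `H`, with `H` allowed to change, as long as `S` spans at most
`|S| + ℓ` edges. A small `S` embeds greedily. A large `S` contains either many leaves or a path of
length `3k` all of whose vertices have degree two. In the second case suppress one vertex of the
path and embed the rest: if no unused vertex can be inserted into the image of the path, then the
unused vertices form a blue clique. In the first case, if no vertex carries many leaves, embed `S`
without its leaves and attach the leaves by Hall's theorem, a violation of Hall's condition being a
large red neighbourhood or a large blue clique. If some vertex does carry many leaves, remove only
one of these: when it cannot be put back, the unused vertices form a red neighbourhood, and `S` is
embedded afresh with the centre of the star placed on a vertex with many blue neighbours.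

For the lower bound colour two disjoint blue cliques on `n - 1` vertices, with all edges between
them red.
-/

namespace CycleRamsey

open Finset SimpleGraph
open scoped Classical

variable {V U : Type*}

/-- The degree of `u` into the finite set `S`. -/
noncomputable def degIn (G : SimpleGraph V) (S : Finset V) (u : V) : ℕ := #{w ∈ S | G.Adj u w}

/-- Twice the number of edges of the subgraph of `G` induced on `S`. -/
noncomputable def degSum (G : SimpleGraph V) (S : Finset V) : ℕ := ∑ u ∈ S, degIn G S u

section Degrees

variable {G : SimpleGraph V} {S T : Finset V} {u b : V}

theorem degIn_mono (h : S ⊆ T) (u : V) : degIn G S u ≤ degIn G T u :=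
  card_le_card (filter_subset_filter _ h)

theorem degIn_lt_card (hu : u ∈ S) : degIn G S u < #S :=
  card_lt_card (filter_ssubset.2 ⟨u, hu, G.irrefl⟩)

theorem degIn_add_card_not_adj (G : SimpleGraph V) (S : Finset V) (u : V) :
    degIn G S u + #{w ∈ S | ¬ G.Adj u w} = #S :=
  card_filter_add_card_filter_not _

theorem degIn_insert (hb : b ∉ T) (u : V) :
    degIn G (insert b T) u = degIn G T u + if G.Adj u b then 1 else 0 := by
  unfold degIn
  split_ifs with h
  · rw [filter_insert, if_pos h, card_insert_of_notMem (by simp [hb])]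
  · rw [filter_insert, if_neg h, add_zero]

theorem degSum_insert (hb : b ∉ T) : degSum G (insert b T) = degSum G T + 2 * degIn G T b := by
  have hcount : ∑ u ∈ T, (if G.Adj u b then 1 else 0) = degIn G T b := by
    rw [← sum_filter, ← card_eq_sum_ones]
    simp only [degIn, G.adj_comm]
  simp only [degSum, sum_insert hb, degIn_insert hb, sum_add_distrib, hcount,
    G.irrefl, if_false]
  ring

theorem degSum_erase_add (hb : b ∈ S) :
    degSum G (S.erase b) + 2 * degIn G S b = degSum G S := by
  have hdeg : degIn G S b = degIn G (S.erase b) b := by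
    conv_lhs => rw [← insert_erase hb]
    rw [degIn_insert (notMem_erase b S), if_neg G.irrefl, add_zero]
  rw [hdeg, ← degSum_insert (notMem_erase b S), insert_erase hb]

theorem card_filter_lt_degIn_mul_le_degSum (G : SimpleGraph V) (S : Finset V) (d : ℕ) :
    #{u ∈ S | d < degIn G S u} * d ≤ degSum G S := calc
  #{u ∈ S | d < degIn G S u} * d ≤ ∑ u ∈ S with d < degIn G S u, degIn G S u := by
    rw [← smul_eq_mul]
    exact card_nsmul_le_sum _ _ _ fun u hu => (mem_filter.1 hu).2.le
  _ ≤ degSum G S := sum_le_sum_of_subset (filter_subset _ _)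

end Degrees

section Cycles

variable {G : SimpleGraph U} {k : ℕ}

theorem cycleGraph_isContained_of_isPath {a x y : U} {p : G.Walk a y} (hp : p.IsPath)
    (hpos : 0 < p.length) (hx : x ∉ p.support) (hxa : G.Adj x a) (hxy : G.Adj x y) :
    cycleGraph (p.length + 2) ⊑ G := by
  rw [cycleGraph_isContained_iff (by omega)]
  have hya : a ≠ y := fun h => hpos.ne' (Walk.length_eq_zero_iff.2 (hp.nil_iff_eq.2 h))
  refine ⟨x, .cons hxa (p.concat hxy.symm), ?_, by simp⟩
  rw [Walk.cons_isCycle_iff]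
  refine ⟨hp.concat hx hxy.symm, fun he => ?_⟩
  rw [Walk.edges_concat, List.concat_eq_append, List.mem_append, List.mem_singleton] at he
  rcases he with he | he
  · exact hx (p.fst_mem_support_of_mem_edges he)
  · simp_all

theorem exists_mem_notMem_support {a y : U} (p : G.Walk a y) {A : Finset U}
    (hA : p.length + 1 < #A) : ∃ b ∈ A, b ∉ p.support := by
  have hcard : #p.support.toFinset < #A := by
    have := p.support.toFinset_card_le
    rw [p.length_support] at this
    omega
  simpa using exists_mem_notMem_of_card_lt_card hcard

theorem cycleGraph_isContained_of_isClique {T : Finset U} (hT : G.IsClique T) (hk : k ≤ #T) :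
    cycleGraph k ⊑ G := by
  obtain ⟨W, hWT, rfl⟩ := exists_subset_card_eq hk
  refine ⟨⟨⟨fun i => (W.equivFin.symm i : U), fun {i j} hij => ?_⟩, ?_⟩⟩
  · exact hT (hWT (W.equivFin.symm i).2) (hWT (W.equivFin.symm j).2)
      fun h => hij.ne (W.equivFin.symm.injective (Subtype.ext h))
  · exact fun i j h => W.equivFin.symm.injective (Subtype.ext h)

theorem exists_isPath_of_le_degIn {T : Finset U} (hT : T.Nonempty)
    (hdeg : ∀ t ∈ T, k ≤ degIn G T t) {j : ℕ} (hj : j < k) :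
    ∃ a b, ∃ p : G.Walk a b, p.IsPath ∧ p.length = j ∧ ∀ z ∈ p.support, z ∈ T := by
  induction j with
  | zero =>
    obtain ⟨t, ht⟩ := hT
    exact ⟨t, t, .nil, by simp, by simp, by simpa using ht⟩
  | succ j ih =>
    obtain ⟨a, b, p, hp, rfl, hpT⟩ := ih (by omega)
    obtain ⟨c, hc, hcp⟩ := exists_mem_notMem_support p
      (hj.trans_le (hdeg a (hpT a p.start_mem_support)))
    rw [mem_filter] at hc
    exact ⟨c, b, .cons hc.2.symm p, hp.cons hcp, by simp, by simpa using ⟨hc.1, hpT⟩⟩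

variable {x : U} {Y : Finset U}

theorem exists_degIn_lt_of_subset_neighborSet (hk : 3 ≤ k) (hfree : (cycleGraph k).Free G)
    (hY : ∀ y ∈ Y, G.Adj x y) (hne : Y.Nonempty) : ∃ y ∈ Y, degIn G Y y < k := by
  by_contra! hdeg
  obtain ⟨a, b, p, hp, hlen, hpY⟩ := exists_isPath_of_le_degIn hne hdeg (j := k - 2) (by omega)
  have hcycle := cycleGraph_isContained_of_isPath hp (by omega)
    (fun hx => (hY x (hpY x hx)).ne rfl) (hY a (hpY a p.start_mem_support))
    (hY b (hpY b p.end_mem_support))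
  exact hfree (by rwa [hlen, Nat.sub_add_cancel (by omega)] at hcycle)

theorem degSum_le_of_subset_neighborSet (hk : 3 ≤ k) (hfree : (cycleGraph k).Free G)
    (hY : ∀ y ∈ Y, G.Adj x y) : degSum G Y ≤ 2 * k * #Y := by
  induction Y using Finset.strongInduction with
  | H Y ih =>
    rcases Y.eq_empty_or_nonempty with rfl | hne
    · simp [degSum]
    · obtain ⟨y, hy, hlt⟩ := exists_degIn_lt_of_subset_neighborSet hk hfree hY hne
      have hrest := ih (Y.erase y) (erase_ssubset hy) fun s hs => hY s (mem_of_mem_erase hs)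
      rw [← degSum_erase_add hy, ← card_erase_add_one hy]
      nlinarith

theorem exists_isIndepSet_of_subset_neighborSet (hk : 3 ≤ k) (hfree : (cycleGraph k).Free G)
    (m : ℕ) (hY : ∀ y ∈ Y, G.Adj x y) (hcard : k * m ≤ #Y) :
    ∃ T ⊆ Y, #T = m ∧ G.IsIndepSet (T : Set U) := by
  induction m generalizing Y with
  | zero => exact ⟨∅, by simp, by simp, by simp [IsIndepSet]⟩
  | succ m ih =>
    have hne : Y.Nonempty := card_pos.1 (by nlinarith)
    obtain ⟨y, hy, hlt⟩ := exists_degIn_lt_of_subset_neighborSet hk hfree hY hne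
    have hcardY := degIn_add_card_not_adj G Y y
    have hcardE := card_erase_add_one (s := {w ∈ Y | ¬ G.Adj y w}) (a := y) (by simp [hy])
    obtain ⟨T, hTY, rfl, hT⟩ := ih (Y := {w ∈ Y | ¬ G.Adj y w}.erase y)
      (fun w hw => hY w (mem_filter.1 (mem_of_mem_erase hw)).1) (by rw [mul_add] at hcard; omega)
    have hTmem (w) (hw : w ∈ T) : w ≠ y ∧ w ∈ Y ∧ ¬ G.Adj y w := by simpa using hTY hw
    refine ⟨insert y T, insert_subset hy fun w hw => (hTmem w hw).2.1,
      card_insert_of_notMem fun h => (hTmem y h).1 rfl, ?_⟩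
    rw [coe_insert, isIndepSet_iff, Set.pairwise_insert]
    exact ⟨hT, fun w hw _ => ⟨(hTmem w hw).2.2, fun h => (hTmem w hw).2.2 h.symm⟩⟩

section CommonNeighbors

variable {A B : Finset U} {y y' : U}

theorem exists_isPath_of_common_neighbors (hA : k ≤ #A)
    (hcommon : ∀ a ∈ A, ∀ b ∈ A, k ≤ #{z ∈ B | G.Adj a z ∧ G.Adj b z})
    (hy' : y' ∈ A) (hadj : G.Adj y y') {j : ℕ} (hj : 2 * j + 2 ≤ k) :
    ∃ a ∈ A, ∃ p : G.Walk a y, p.IsPath ∧ p.length = 2 * j + 1 ∧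
      ∀ z ∈ p.support, z = y ∨ z ∈ A ∨ z ∈ B := by
  induction j with
  | zero => exact ⟨y', hy', hadj.symm.toWalk, by simp [hadj.ne'], by simp, by simp [hy']⟩
  | succ j ih =>
    obtain ⟨a, ha, p, hp, hlen, hpAB⟩ := ih (by omega)
    obtain ⟨a', ha', ha'p⟩ := exists_mem_notMem_support p (A := A) (by omega)
    obtain ⟨b, hb, hbp⟩ :=
      exists_mem_notMem_support p (lt_of_lt_of_le (by omega) (hcommon a ha a' ha'))
    obtain ⟨hbB, hab, ha'b⟩ := mem_filter.1 hb
    refine ⟨a', ha', .cons ha'b (.cons hab.symm p), (hp.cons hbp).cons ?_, by simp; omega, ?_⟩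
    · simpa [ha'p] using ha'b.ne
    · simpa [ha', hbB] using hpAB

theorem cycleGraph_isContained_of_common_neighbors (hk : 3 ≤ k) (hodd : Odd k)
    (hA : k ≤ #A)
    (hcommon : ∀ a ∈ A, ∀ b ∈ A, k ≤ #{z ∈ B | G.Adj a z ∧ G.Adj b z})
    (hy' : y' ∈ A) (hadj : G.Adj y y')
    (hclose : ∀ a ∈ A, ∀ p : G.Walk a y, p.length + 2 = k →
      (∀ z ∈ p.support, z = y ∨ z ∈ A ∨ z ∈ B) → ∃ x ∉ p.support, G.Adj x a ∧ G.Adj x y) :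
    cycleGraph k ⊑ G := by
  obtain ⟨r, rfl⟩ := hodd
  obtain ⟨a, ha, p, hp, hlen, hpAB⟩ :=
    exists_isPath_of_common_neighbors hA hcommon hy' hadj (j := r - 1) (by omega)
  obtain ⟨x, hx, hxa, hxy⟩ := hclose a ha p (by omega) hpAB
  have hcycle := cycleGraph_isContained_of_isPath hp (by omega) hx hxa hxy
  rwa [show p.length + 2 = 2 * r + 1 by omega] at hcycle

theorem isIndepSet_of_common_neighbors (hk : 3 ≤ k) (hodd : Odd k)
    (hfree : (cycleGraph k).Free G) (hA : k ≤ #A)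
    (hcommon : ∀ a ∈ A, ∀ b ∈ A, k ≤ #{z ∈ B | G.Adj a z ∧ G.Adj b z}) :
    G.IsIndepSet (A : Set U) := by
  intro y hy y' hy' _ hadj
  refine hfree (cycleGraph_isContained_of_common_neighbors hk hodd hA hcommon hy' hadj ?_)
  intro a ha p hlen _
  obtain ⟨b, hb, hbp⟩ :=
    exists_mem_notMem_support p (lt_of_lt_of_le (by omega) (hcommon a ha y hy))
  exact ⟨b, hbp, (mem_filter.1 hb).2.1.symm, (mem_filter.1 hb).2.2.symm⟩

end CommonNeighbors

end Cycles

/-- The subgraph of `H` induced on `S` is connected, in the form: every proper nonempty part of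
`S` is joined by an edge to the rest of `S`. -/
def ConnectedOn (H : SimpleGraph V) (S : Finset V) : Prop :=
  ∀ T ⊆ S, T.Nonempty → T ≠ S → ∃ u ∈ T, ∃ w ∈ S, w ∉ T ∧ H.Adj u w

/-- Every subset `T` of `S` spans at most `|T| + ℓ` edges. -/
def SparseOn (H : SimpleGraph V) (S : Finset V) (ℓ : ℕ) : Prop :=
  ∀ T ⊆ S, degSum H T ≤ 2 * #T + 2 * ℓ

/-- The leaves of the subgraph of `H` induced on `S`. -/
noncomputable def leaves (H : SimpleGraph V) (S : Finset V) : Finset V := {u ∈ S | degIn H S u = 1}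

/-- `f` embeds the subgraph of `H` induced on `S` into `G`; its values outside `S` are
irrelevant. -/
structure EmbedsOn (H : SimpleGraph V) (G : SimpleGraph U) (S : Finset V) (f : V → U) : Prop where
  injOn : Set.InjOn f S
  map_adj : ∀ u ∈ S, ∀ w ∈ S, H.Adj u w → G.Adj (f u) (f w)

section Sparse

variable {H : SimpleGraph V} {S T : Finset V} {ℓ : ℕ}

theorem SparseOn.mono (h : SparseOn H S ℓ) (hT : T ⊆ S) : SparseOn H T ℓ :=
  fun _ hR => h _ (hR.trans hT)

theorem ConnectedOn.sparseOn (hconn : ConnectedOn H S) (hS : degSum H S ≤ 2 * #S + 2 * ℓ) :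
    SparseOn H S ℓ := by
  intro T hT
  induction hm : #(S \ T) generalizing T with
  | zero =>
    rw [card_eq_zero, sdiff_eq_empty_iff_subset] at hm
    rwa [hT.antisymm hm]
  | succ m ih =>
    rcases T.eq_empty_or_nonempty with rfl | hne
    · simp [degSum]
    obtain ⟨u, hu, w, hw, hwT, hadj⟩ := hconn T hT hne (by rintro rfl; simp at hm)
    have hlarger := ih (T := insert w T) (insert_subset hw hT)
      (by rw [sdiff_insert, card_erase_of_mem (by simp [hw, hwT]), hm]; rfl)
    rw [degSum_insert hwT, card_insert_of_notMem hwT] at hlarger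
    have hpos : 0 < degIn H T w := card_pos.2 ⟨u, by simp [hu, hadj.symm]⟩
    omega

theorem ConnectedOn.degIn_pos (hconn : ConnectedOn H S) (hS : 1 < #S) {u : V} (hu : u ∈ S) :
    0 < degIn H S u := by
  obtain ⟨x, hx, w, hw, -, hadj⟩ := hconn {u} (by simpa using hu) (singleton_nonempty u)
    (by rintro rfl; simp at hS)
  rw [mem_singleton] at hx
  exact card_pos.2 ⟨w, by simp [hw, hx ▸ hadj]⟩

theorem exists_degIn_mul_card_le (H : SimpleGraph V) (hne : S.Nonempty) :
    ∃ u ∈ S, degIn H S u * #S ≤ degSum H S := by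
  obtain ⟨u, hu, hmin⟩ := exists_min_image S (degIn H S) hne
  refine ⟨u, hu, ?_⟩
  rw [mul_comm, ← smul_eq_mul]
  exact card_nsmul_le_sum _ _ _ hmin

end Sparse

section Embeddings

variable {H : SimpleGraph V} {G : SimpleGraph U} {S T : Finset V} {f g : V → U}

theorem EmbedsOn.congr (hf : EmbedsOn H G S f) (h : Set.EqOn f g S) : EmbedsOn H G S g where
  injOn := hf.injOn.congr h
  map_adj u hu w hw hadj := by
    rw [← h hu, ← h hw]
    exact hf.map_adj u hu w hw hadj

theorem EmbedsOn.mono (hf : EmbedsOn H G S f) (h : T ⊆ S) : EmbedsOn H G T f where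
  injOn := hf.injOn.mono (coe_subset.2 h)
  map_adj u hu w hw := hf.map_adj u (h hu) w (h hw)

theorem EmbedsOn.union (hf : EmbedsOn H G S f) (hg : EmbedsOn H G T g)
    (hne : ∀ s ∈ S, ∀ t ∈ T, f s ≠ g t)
    (hadj : ∀ s ∈ S, ∀ t ∈ T, H.Adj s t → G.Adj (f s) (g t)) :
    EmbedsOn H G (S ∪ T) (S.piecewise f g) where
  injOn u hu w hw huw := by
    rw [mem_coe, mem_union] at hu hw
    by_cases huS : u ∈ S <;> by_cases hwS : w ∈ S <;>
      simp only [piecewise_eq_of_mem, piecewise_eq_of_notMem, huS, hwS, not_false_eq_true,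
        false_or] at huw hu hw
    · exact hf.injOn huS hwS huw
    · exact absurd huw (hne u huS w hw)
    · exact absurd huw.symm (hne w hwS u hu)
    · exact hg.injOn hu hw huw
  map_adj u hu w hw huw := by
    rw [mem_union] at hu hw
    by_cases huS : u ∈ S <;> by_cases hwS : w ∈ S <;>
      simp only [piecewise_eq_of_mem, piecewise_eq_of_notMem, huS, hwS, not_false_eq_true,
        false_or] at hu hw ⊢
    · exact hf.map_adj u huS w hwS huw
    · exact hadj u huS w hw huw
    · exact (hadj w hwS u hu huw.symm).symm
    · exact hg.map_adj u hu w hw huw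

theorem EmbedsOn.update {u : V} {z : U} (hf : EmbedsOn H G S f) (hu : u ∉ S)
    (hne : ∀ s ∈ S, f s ≠ z) (hadj : ∀ s ∈ S, H.Adj u s → G.Adj (f s) z) :
    EmbedsOn H G (insert u S) (Function.update f u z) := by
  have hsingle : EmbedsOn H G {u} fun _ => z := ⟨by simp, by simp⟩
  have hunion := hf.union hsingle (by simpa using hne) (by simpa [H.adj_comm] using hadj)
  rw [union_comm, ← insert_eq] at hunion
  refine hunion.congr fun w hw => ?_
  rcases mem_insert.1 hw with rfl | hw
  · simp [hu]
  · rw [piecewise_eq_of_mem _ _ _ hw, Function.update_of_ne (ne_of_mem_of_not_mem hw hu)]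

theorem EmbedsOn.hasCopy [Fintype V] (hf : EmbedsOn H G univ f) : HasCopy H G :=
  ⟨⟨f, fun h => hf.map_adj _ (mem_univ _) _ (mem_univ _) h⟩, by simpa using hf.injOn⟩

variable {C : SimpleGraph U} {Z : Finset U}

theorem exists_embedsOn_compl_of_isIndepSet [Nonempty U] (H : SimpleGraph V)
    (hZ : C.IsIndepSet (Z : Set U)) (hcard : #S ≤ #Z) : ∃ f, EmbedsOn H Cᶜ S f := by
  obtain ⟨f, hfZ, hf⟩ := S.finite_toSet.exists_injOn_of_encard_le (t := (Z : Set U))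
    (by simpa [Set.encard_coe_eq_coe_finsetCard] using hcard)
  refine ⟨f, hf, fun u hu w hw hadj => ?_⟩
  have hne : f u ≠ f w := fun h => hadj.ne (hf hu hw h)
  exact ⟨hne, hZ (hfZ hu) (hfZ hw) hne⟩

theorem EmbedsOn.exists_insert {u : V} (hf : EmbedsOn H Cᶜ S f) (hu : u ∉ S)
    (hcard : #S + ∑ w ∈ S with H.Adj u w, degIn C Z (f w) < #Z) :
    ∃ z ∈ Z, EmbedsOn H Cᶜ (insert u S) (Function.update f u z) := by
  have hforbidden : #(S.image f ∪ {w ∈ S | H.Adj u w}.biUnion fun w => {z ∈ Z | C.Adj (f w) z})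
      < #Z := calc
    _ ≤ #(S.image f) + #({w ∈ S | H.Adj u w}.biUnion fun w => {z ∈ Z | C.Adj (f w) z}) :=
      card_union_le _ _
    _ ≤ #S + ∑ w ∈ S with H.Adj u w, degIn C Z (f w) := add_le_add card_image_le card_biUnion_le
    _ < #Z := hcard
  obtain ⟨z, hz, hzf⟩ := exists_mem_notMem_of_card_lt_card hforbidden
  simp only [mem_union, mem_image, mem_biUnion, mem_filter, not_or, not_exists, not_and] at hzf
  exact ⟨z, hz, hf.update hu hzf.1 fun s hs hus => ⟨hzf.1 s hs, hzf.2 s ⟨hs, hus⟩ hz⟩⟩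

theorem EmbedsOn.exists_of_erase {u : V} {Δ : ℕ} (hf : EmbedsOn H Cᶜ (S.erase u) f)
    (hfZ : Set.MapsTo f (S.erase u) Z) (hu : u ∈ S) (hΔ : ∀ z ∈ Z, degIn C Z z ≤ Δ)
    (hcard : #S + degIn H S u * Δ ≤ #Z) :
    ∃ g, EmbedsOn H Cᶜ S g ∧ Set.MapsTo g S Z := by
  have hsum : ∑ w ∈ S.erase u with H.Adj u w, degIn C Z (f w) ≤ degIn H S u * Δ := calc
    _ ≤ degIn H (S.erase u) u * Δ := by
      rw [← smul_eq_mul]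
      exact sum_le_card_nsmul _ _ _ fun w hw => hΔ _ (hfZ (mem_filter.1 hw).1)
    _ ≤ degIn H S u * Δ := Nat.mul_le_mul_right _ (degIn_mono (erase_subset _ _) u)
  obtain ⟨z, hz, hg⟩ := hf.exists_insert (notMem_erase u S) (Z := Z)
    (by have := card_erase_add_one hu; omega)
  rw [insert_erase hu] at hg
  refine ⟨_, hg, fun w hw => ?_⟩
  by_cases hwu : w = u
  · simpa [hwu] using hz
  · rw [Function.update_of_ne hwu]
    exact hfZ (mem_erase.2 ⟨hwu, hw⟩)

theorem exists_embedsOn_compl_of_degIn_le [Nonempty U] {Δ ℓ : ℕ}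
    (hΔ : ∀ z ∈ Z, degIn C Z z ≤ Δ) (hS : SparseOn H S ℓ)
    (hcard : ∀ d m, d < m → m ≤ #S → d * m ≤ 2 * m + 2 * ℓ → m + d * Δ ≤ #Z) :
    ∃ f, EmbedsOn H Cᶜ S f ∧ Set.MapsTo f S Z := by
  induction S using Finset.strongInduction with
  | H S ih =>
    rcases S.eq_empty_or_nonempty with rfl | hne
    · exact ⟨fun _ => Classical.arbitrary U, ⟨by simp, by simp⟩, by simp [Set.mapsTo_empty]⟩
    obtain ⟨u, hu, hmin⟩ := exists_degIn_mul_card_le H hne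
    obtain ⟨f, hf, hfZ⟩ := ih (S.erase u) (erase_ssubset hu) (hS.mono (erase_subset _ _))
      fun d m hd hm => hcard d m hd (hm.trans (card_le_card (erase_subset _ _)))
    exact hf.exists_of_erase hfZ hu hΔ
      (hcard _ _ (degIn_lt_card hu) le_rfl (hmin.trans (hS S Subset.rfl)))

theorem exists_embedsOn_compl_of_mul_card_le [Fintype U] [Nonempty U] {k ℓ : ℕ} (hk : 3 ≤ k)
    (hfree : (cycleGraph k).Free C) (hS : SparseOn H S ℓ)
    (hcard : (2 * k + 1) * #S + 2 * k * ℓ ≤ Fintype.card U) : ∃ f, EmbedsOn H Cᶜ S f := by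
  induction S using Finset.strongInduction with
  | H S ih =>
    rcases S.eq_empty_or_nonempty with rfl | hne
    · exact ⟨fun _ => Classical.arbitrary U, by simp, by simp⟩
    by_cases hbig : ∃ x, k * #S ≤ degIn C univ x
    · obtain ⟨x, hx⟩ := hbig
      obtain ⟨T, -, hT, hindep⟩ := exists_isIndepSet_of_subset_neighborSet hk hfree #S
        (fun y hy => (mem_filter.1 hy).2) hx
      exact exists_embedsOn_compl_of_isIndepSet H hindep hT.ge
    · push Not at hbig
      obtain ⟨u, hu, hmin⟩ := exists_degIn_mul_card_le H hne
      obtain ⟨f, hf⟩ := ih (S.erase u) (erase_ssubset hu) (hS.mono (erase_subset _ _))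
        (le_trans (by gcongr; exact erase_subset _ _) hcard)
      obtain ⟨g, hg, -⟩ := hf.exists_of_erase (Z := univ) (by simp [Set.MapsTo]) hu
        (fun z _ => (hbig z).le) <| calc
          #S + degIn H S u * (k * #S) = #S + k * (degIn H S u * #S) := by ring
          _ ≤ #S + k * (2 * #S + 2 * ℓ) := by gcongr; exact hmin.trans (hS S Subset.rfl)
          _ = (2 * k + 1) * #S + 2 * k * ℓ := by ring
          _ ≤ #univ := hcard
      exact ⟨g, hg⟩

theorem EmbedsOn.exists_union_leaves {M : Finset V} {p : V → V} {m : ℕ}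
    (hf : EmbedsOn H Cᶜ S f) (hd : Disjoint S M)
    (hp : ∀ u ∈ M, p u ∈ S) (hadj : ∀ u ∈ M, ∀ w ∈ S ∪ M, H.Adj u w → w = p u)
    (hm : #S + #M ≤ m) (hdeg : ∀ u ∈ M, m + degIn C Z (f (p u)) ≤ #Z) :
    ∃ g, EmbedsOn H Cᶜ (S ∪ M) g ∧ Set.EqOn g f S := by
  induction M using Finset.induction_on with
  | empty => exact ⟨f, by simpa using hf, Set.eqOn_refl f S⟩
  | insert u M hu ih =>
    rw [card_insert_of_notMem hu] at hm
    rw [disjoint_insert_right] at hd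
    rw [forall_mem_insert] at hp hadj hdeg
    rw [union_insert] at hadj
    obtain ⟨g, hg, hgf⟩ := ih hd.2 hp.2
      (fun w hw v hv => hadj.2 w hw v (mem_insert_of_mem hv)) (by omega) hdeg.2
    have hsum : ∑ w ∈ S ∪ M with H.Adj u w, degIn C Z (g w) ≤ degIn C Z (f (p u)) := by
      rw [← hgf hp.1, ← sum_singleton (fun w => degIn C Z (g w)) (p u)]
      refine sum_le_sum_of_subset fun w hw => mem_singleton.2 ?_
      exact hadj.1 w (mem_insert_of_mem (mem_filter.1 hw).1) (mem_filter.1 hw).2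
    obtain ⟨z, -, hgz⟩ := hg.exists_insert (u := u) (Z := Z) (by simp [hd.1, hu]) <| calc
      _ ≤ #S + #M + degIn C Z (f (p u)) := add_le_add (card_union_le _ _) hsum
      _ < #Z := by omega
    refine ⟨_, union_insert u S M ▸ hgz, fun s hs => ?_⟩
    rw [Function.update_of_ne (ne_of_mem_of_not_mem hs hd.1), hgf hs]

end Embeddings

section LeafCount

variable {H : SimpleGraph V} {S B T : Finset V} {q ℓ : ℕ}

theorem sum_degIn_comm (H : SimpleGraph V) (S T : Finset V) :
    ∑ u ∈ S, degIn H T u = ∑ w ∈ T, degIn H S w := by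
  simpa only [degIn, bipartiteAbove, bipartiteBelow, H.adj_comm] using
    sum_card_bipartiteAbove_eq_sum_card_bipartiteBelow (s := S) (t := T) H.Adj

theorem mem_edges_of_degIn_le_two {a b u w : V} {p : H.Walk a b} (hp : p.IsPath)
    (hpT : ∀ z ∈ p.support, z ∈ T) (hu : u ∈ p.support) (hua : u ≠ a) (hub : u ≠ b)
    (hdeg : degIn H T u ≤ 2) (hw : w ∈ T) (huw : H.Adj u w) : s(u, w) ∈ p.edges := by
  obtain ⟨i, rfl, hi⟩ := Walk.mem_support_iff_exists_getVert.1 hu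
  have hpos : i ≠ 0 := by rintro rfl; simp at hua
  have hlt : i < p.length := hi.lt_of_ne (by rintro rfl; simp at hub)
  have hprev : H.Adj (p.getVert i) (p.getVert (i - 1)) := by
    simpa [Nat.sub_add_cancel (Nat.pos_of_ne_zero hpos)] using
      (p.adj_getVert_succ (i := i - 1) (by omega)).symm
  have hnext : H.Adj (p.getVert i) (p.getVert (i + 1)) := p.adj_getVert_succ hlt
  by_contra hedge
  rw [Walk.mk_mem_edges_iff_exists] at hedge
  push Not at hedge
  have hwprev : p.getVert (i - 1) ≠ w := by
    rintro rfl
    exact hedge (i - 1) (by omega) (by rw [Nat.sub_add_cancel (by omega), Sym2.eq_swap])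
  have hwnext : p.getVert (i + 1) ≠ w := fun h => hedge i hlt (by rw [h])
  have hne : p.getVert (i - 1) ≠ p.getVert (i + 1) := fun h => by
    have := hp.getVert_injOn (by simp; omega) (by simp; omega) h
    omega
  have hthree : {p.getVert (i - 1), p.getVert (i + 1), w} ⊆ {z ∈ T | H.Adj (p.getVert i) z} := by
    simp [insert_subset_iff, hpT, hw, hprev, hnext, huw]
  have hcard := (card_le_card hthree).trans hdeg
  rw [card_eq_three.2 ⟨_, _, _, hne, hwprev, hwnext, rfl⟩] at hcard
  omega

theorem exists_isPath_length_succ (hdeg : ∀ u ∈ T, degIn H T u ≤ 2) {a b u w : V}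
    {p : H.Walk a b} (hp : p.IsPath) (hpT : ∀ z ∈ p.support, z ∈ T) (hu : u ∈ p.support)
    (hw : w ∈ T) (hwp : w ∉ p.support) (huw : H.Adj u w) :
    ∃ a' b', ∃ p' : H.Walk a' b', p'.IsPath ∧ p'.length = p.length + 1 ∧
      ∀ z ∈ p'.support, z ∈ T := by
  by_cases hua : u = a
  · subst hua
    exact ⟨w, b, .cons huw.symm p, hp.cons hwp, by simp, by simpa using ⟨hw, hpT⟩⟩
  by_cases hub : u = b
  · subst hub
    refine ⟨a, w, p.concat huw, hp.concat hwp huw, by simp, fun z hz => ?_⟩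
    rw [Walk.support_concat, List.mem_append, List.mem_singleton] at hz
    rcases hz with hz | rfl
    · exact hpT z hz
    · exact hw
  exact absurd (p.snd_mem_support_of_mem_edges
    (mem_edges_of_degIn_le_two hp hpT hu hua hub (hdeg u (hpT u hu)) hw huw)) hwp

/-- The set `P` is the vertex set of a longest path of `T`. -/
theorem exists_closed_subset_card_le (hdeg : ∀ u ∈ T, degIn H T u ≤ 2) (hne : T.Nonempty)
    (hpath : ∀ a b, ∀ p : H.Walk a b, p.IsPath → (∀ u ∈ p.support, u ∈ T) → p.length < q) :
    ∃ P ⊆ T, P.Nonempty ∧ #P ≤ q ∧ ∀ u ∈ P, ∀ w ∈ T, H.Adj u w → w ∈ P := by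
  by_contra! hopen
  have hlong (j : ℕ) : ∃ a b, ∃ p : H.Walk a b, p.IsPath ∧ p.length = j ∧
      ∀ z ∈ p.support, z ∈ T := by
    induction j with
    | zero =>
      obtain ⟨t, ht⟩ := hne
      exact ⟨t, t, .nil, by simp, by simp, by simpa using ht⟩
    | succ j ih =>
      obtain ⟨a, b, p, hp, rfl, hpT⟩ := ih
      have hcard : #p.support.toFinset ≤ q :=
        p.support.toFinset_card_le.trans (p.length_support.trans_le (hpath a b p hp hpT))
      obtain ⟨u, hu, w, hw, huw, hwp⟩ := hopen p.support.toFinset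
        (fun z hz => hpT z (List.mem_toFinset.1 hz)) ⟨a, by simp⟩ hcard
      rw [List.mem_toFinset] at hu hwp
      exact exists_isPath_length_succ hdeg hp hpT hu hw hwp huw
  obtain ⟨a, b, p, hp, hlen, hpT⟩ := hlong q
  exact (hpath a b p hp hpT).ne hlen

theorem ConnectedOn.card_le_mul_sum_degIn_sdiff (hconn : ConnectedOn H S) (hBS : B ⊆ S)
    (hdeg : ∀ u ∈ B, degIn H B u ≤ 2) (hqS : q < #S)
    (hpath : ∀ a b, ∀ p : H.Walk a b, p.IsPath → (∀ u ∈ p.support, u ∈ B) → p.length < q)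
    (hTB : T ⊆ B) (hclosed : ∀ u ∈ T, ∀ w ∈ B, H.Adj u w → w ∈ T) :
    #T ≤ q * ∑ u ∈ T, degIn H (S \ B) u := by
  induction T using Finset.strongInduction with
  | H T ih =>
    rcases T.eq_empty_or_nonempty with rfl | hne
    · simp
    obtain ⟨P, hPT, hPne, hPq, hPT_closed⟩ := exists_closed_subset_card_le
      (fun u hu => (degIn_mono hTB u).trans (hdeg u (hTB hu))) hne
      fun a b p hp hpT => hpath a b p hp fun u hu => hTB (hpT u hu)
    have hP_closed (u) (hu : u ∈ P) (w) (hw : w ∈ B) (huw : H.Adj u w) : w ∈ P :=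
      hPT_closed u hu w (hclosed u (hPT hu) w hw huw) huw
    have hrest := ih (T \ P) (sdiff_ssubset hPT hPne) (sdiff_subset.trans hTB) fun u hu w hw huw =>
      mem_sdiff.2 ⟨hclosed u (mem_sdiff.1 hu).1 w hw huw, fun hwP =>
        (mem_sdiff.1 hu).2 (hP_closed w hwP u (hTB (mem_sdiff.1 hu).1) huw.symm)⟩
    obtain ⟨u, hu, w, hw, hwP, huw⟩ := hconn P (hPT.trans (hTB.trans hBS)) hPne
      (by rintro rfl; omega)
    have hexit : 1 ≤ ∑ u ∈ P, degIn H (S \ B) u := calc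
      1 ≤ degIn H (S \ B) u := card_pos.2 ⟨w, mem_filter.2
        ⟨mem_sdiff.2 ⟨hw, fun hwB => hwP (hP_closed u hu w hwB huw)⟩, huw⟩⟩
      _ ≤ _ := single_le_sum (fun _ _ => Nat.zero_le _) hu
    rw [← sum_sdiff hPT, ← card_sdiff_add_card_eq_card hPT]
    nlinarith

/-- The bound comes from double counting the edges leaving the set of vertices of degree two. -/
theorem ConnectedOn.card_le_of_forall_isPath_length_lt (hconn : ConnectedOn H S) (hS : 1 < #S)
    (hqS : q < #S) (hsum : degSum H S ≤ 2 * #S + 2 * ℓ)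
    (hpath : ∀ a b, ∀ p : H.Walk a b, p.IsPath →
      (∀ u ∈ p.support, u ∈ S ∧ degIn H S u = 2) → p.length < q) :
    #S ≤ (4 * q + 2) * #(leaves H S) + (6 * q + 2) * ℓ := by
  set B := {u ∈ S | degIn H S u = 2}
  set L := leaves H S
  have hBS : B ⊆ S := filter_subset _ _
  have hcardB : #B ≤ q * ∑ w ∈ S \ B, degIn H S w := calc
    #B ≤ q * ∑ u ∈ B, degIn H (S \ B) u := hconn.card_le_mul_sum_degIn_sdiff hBS
      (fun u hu => (degIn_mono hBS u).trans (mem_filter.1 hu).2.le) hqS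
      (fun a b p hp hpB => hpath a b p hp fun u hu => mem_filter.1 (hpB u hu)) Subset.rfl
      fun _ _ _ hw _ => hw
    _ = q * ∑ w ∈ S \ B, degIn H B w := by rw [sum_degIn_comm]
    _ ≤ q * ∑ w ∈ S \ B, degIn H S w := by
      gcongr with w
      exact degIn_mono hBS w
  have hdegB : ∑ u ∈ B, degIn H S u = 2 * #B := by
    rw [sum_congr rfl fun u hu => (mem_filter.1 hu).2, sum_const, smul_eq_mul, mul_comm]
  have hsplit : ∑ u ∈ S \ B, degIn H S u + 2 * #B = degSum H S := by
    rw [← hdegB, sum_sdiff hBS, degSum]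
  have hthree : 3 * #(S \ B) ≤ ∑ u ∈ S \ B, degIn H S u + 2 * #L := calc
    3 * #(S \ B) = ∑ u ∈ S \ B, 3 := by rw [sum_const, smul_eq_mul, mul_comm]
    _ ≤ ∑ u ∈ S \ B, (degIn H S u + if degIn H S u = 1 then 2 else 0) := by
      refine sum_le_sum fun u hu => ?_
      obtain ⟨huS, hu⟩ := mem_sdiff.1 hu
      have hu2 : degIn H S u ≠ 2 := fun h => hu (mem_filter.2 ⟨huS, h⟩)
      have := hconn.degIn_pos hS huS
      split_ifs <;> omega
    _ ≤ ∑ u ∈ S \ B, degIn H S u + 2 * #L := by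
      rw [sum_add_distrib, ← sum_filter, sum_const, smul_eq_mul, mul_comm]
      gcongr
      exact filter_subset_filter _ sdiff_subset
  have hcardS := card_sdiff_add_card_eq_card hBS
  have hdegA : ∑ w ∈ S \ B, degIn H S w ≤ 4 * #L + 6 * ℓ := by omega
  nlinarith [Nat.mul_le_mul_left q hdegA]

end LeafCount

section PathInsertion

variable {G : SimpleGraph U} {x y : U}

theorem exists_eq_append_cons (q : G.Walk x y) {i : ℕ} (hi : i < q.length) :
    ∃ u u', ∃ (h : G.Adj u u') (q₁ : G.Walk x u) (q₂ : G.Walk u' y),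
      q = q₁.append (.cons h q₂) ∧ q₁.length = i := by
  have hdrop : ¬ (q.drop i).Nil := by
    rw [Walk.nil_drop_iff]
    omega
  obtain ⟨u', h, q₂, hq₂⟩ := Walk.not_nil_iff.1 hdrop
  refine ⟨_, u', h, q.take i, q₂, ?_, by simp [hi.le]⟩
  rw [← hq₂, q.append_take_drop_eq]

theorem exists_isPath_insert {u u' v w w' : U} {h : G.Adj u u'} {h' : G.Adj w w'}
    {q₁ : G.Walk x u} {q₂ : G.Walk u' w} {q₃ : G.Walk w' y} {q : G.Walk x y}
    (hq : q.IsPath) (hv : v ∉ q.support) (heq : q = q₁.append (.cons h (q₂.append (.cons h' q₃))))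
    (huv : G.Adj u v) (hvw : G.Adj v w) (hadj : G.Adj u' w') :
    ∃ q' : G.Walk x y, q'.IsPath ∧ q'.length = q.length + 1 ∧
      ∀ z ∈ q'.support, z = v ∨ z ∈ q.support := by
  let q' := q₁.append (.cons huv (.cons hvw (q₂.reverse.append (.cons hadj q₃))))
  have hperm : q'.support.Perm (v :: q.support) := by
    simp only [q', heq, Walk.support_append, Walk.support_cons, Walk.support_reverse,
      List.tail_cons]
    exact List.perm_middle.trans
      (.cons v (.append_left _ (.append_right _ q₂.support.reverse_perm)))
  refine ⟨q', .mk' (hperm.nodup_iff.2 (hq.support_nodup.cons hv)), ?_, fun z hz => ?_⟩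
  · simpa using hperm.length_eq
  · exact List.mem_cons.1 (hperm.mem_iff.1 hz)

theorem exists_isPath_insert_of_adj_getVert {q : G.Walk x y} (hq : q.IsPath) {v : U}
    (hv : v ∉ q.support) {i j : ℕ} (hij : i < j) (hj : j < q.length)
    (hi_adj : G.Adj (q.getVert i) v) (hj_adj : G.Adj (q.getVert j) v)
    (hadj : G.Adj (q.getVert (i + 1)) (q.getVert (j + 1))) :
    ∃ q' : G.Walk x y, q'.IsPath ∧ q'.length = q.length + 1 ∧
      ∀ z ∈ q'.support, z = v ∨ z ∈ q.support := by
  obtain ⟨w, w', h', r, q₃, rfl, rfl⟩ := exists_eq_append_cons q hj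
  obtain ⟨u, u', h, q₁, q₂, rfl, rfl⟩ := exists_eq_append_cons r hij
  have hu' : (if 0 < q₂.length then u' else w) = u' := by
    split_ifs with hpos
    · rfl
    · exact (Walk.eq_of_length_eq_zero (Nat.eq_zero_of_not_pos hpos)).symm
  exact exists_isPath_insert hq hv (q₁.append_assoc (.cons h q₂) (.cons h' q₃)).symm
    (by simpa [Walk.getVert_append] using hi_adj)
    (by simpa [Walk.getVert_append] using hj_adj.symm)
    (by simpa [Walk.getVert_append, hu'] using hadj)

/-- The successors on `q` of the vertices joined to `v` by blue edges form a red clique. -/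
theorem card_compl_adj_getVert_lt {C : SimpleGraph U} {k : ℕ} (hfree : (cycleGraph k).Free C)
    {q : Cᶜ.Walk x y} (hq : q.IsPath) {v : U} (hv : v ∉ q.support)
    (hno : ¬ ∃ q' : Cᶜ.Walk x y, q'.IsPath ∧ q'.length = q.length + 1 ∧
      ∀ z ∈ q'.support, z = v ∨ z ∈ q.support) :
    #{i ∈ range q.length | Cᶜ.Adj (q.getVert i) v} < k := by
  by_contra! hk
  set I := {i ∈ range q.length | Cᶜ.Adj (q.getVert i) v} with hI
  have hinj : Set.InjOn (fun i => q.getVert (i + 1)) I := fun i hi j hj hij => by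
    simp only [hI, coe_filter, mem_range, Set.mem_ofPred_eq] at hi hj
    exact Nat.succ_injective (hq.getVert_injOn (by simp; omega) (by simp; omega) hij)
  have hlt (i) (hi : i ∈ I) (j) (hj : j ∈ I) (hij : i < j) :
      C.Adj (q.getVert (i + 1)) (q.getVert (j + 1)) := by
    by_contra hred
    obtain ⟨-, hi_adj⟩ := mem_filter.1 hi
    obtain ⟨hj_lt, hj_adj⟩ := mem_filter.1 hj
    exact hno (exists_isPath_insert_of_adj_getVert hq hv hij (mem_range.1 hj_lt) hi_adj hj_adj
      ⟨fun h => hij.ne (hinj hi hj h), hred⟩)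
  have hclique : C.IsClique (I.image fun i => q.getVert (i + 1) : Finset U) := by
    intro z hz w hw hzw
    obtain ⟨i, hi, rfl⟩ := mem_image.1 hz
    obtain ⟨j, hj, rfl⟩ := mem_image.1 hw
    rcases lt_trichotomy i j with hij | rfl | hij
    · exact hlt i hi j hj hij
    · exact absurd rfl hzw
    · exact (hlt j hj i hi hij).symm
  exact hfree (cycleGraph_isContained_of_isClique hclique (by rwa [card_image_of_injOn hinj]))

theorem isIndepSet_or_exists_isPath_insert {C : SimpleGraph U} {Z : Finset U} {k : ℕ}
    (hk : 3 ≤ k) (hodd : Odd k) (hfree : (cycleGraph k).Free C) {q : Cᶜ.Walk x y} (hq : q.IsPath)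
    (hlen : 3 * k ≤ q.length + 1) (hZ : ∀ z ∈ Z, z ∉ q.support) (hcard : k ≤ #Z) :
    C.IsIndepSet (Z : Set U) ∨ ∃ v ∈ Z, ∃ q' : Cᶜ.Walk x y, q'.IsPath ∧
      q'.length = q.length + 1 ∧ ∀ z ∈ q'.support, z = v ∨ z ∈ q.support := by
  by_contra! hcon
  obtain ⟨hindep, hno⟩ := hcon
  have hinj : Set.InjOn q.getVert (range q.length) :=
    hq.getVert_injOn.mono fun i hi => (mem_range.1 hi).le
  refine hindep (isIndepSet_of_common_neighbors hk hodd hfree hcard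
    (B := (range q.length).image q.getVert) fun a ha b hb => ?_)
  have hblue (v) (hv : v ∈ Z) :
      #{z ∈ (range q.length).image q.getVert | ¬ C.Adj v z} < k := by
    rw [filter_image, card_image_of_injOn (hinj.mono (filter_subset _ _))]
    refine (card_le_card ?_).trans_lt (card_compl_adj_getVert_lt hfree hq (hZ v hv) ?_)
    · refine monotone_filter_right _ fun i _ hi => ⟨?_, fun h => hi h.symm⟩
      rintro rfl
      exact hZ _ hv (q.getVert_mem_support i)
    · simpa using hno v hv
  have hunion := card_union_le {z ∈ (range q.length).image q.getVert | ¬ C.Adj a z}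
    {z ∈ (range q.length).image q.getVert | ¬ C.Adj b z}
  simp only [← filter_or, ← not_and_or] at hunion
  have hsplit := card_filter_add_card_filter_not (s := (range q.length).image q.getVert)
    fun z => C.Adj a z ∧ C.Adj b z
  rw [card_image_of_injOn hinj, card_range] at hsplit
  have hblue_a := hblue a ha
  have hblue_b := hblue b hb
  omega

end PathInsertion

section Suppression

variable {H : SimpleGraph V} {G : SimpleGraph U} {S : Finset V} {f : V → U}

theorem EmbedsOn.exists_isPath {a b : V} (hf : EmbedsOn H G S f) {p : H.Walk a b}
    (hp : p.IsPath) (hpS : ∀ z ∈ p.support, z ∈ S) :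
    ∃ q : G.Walk (f a) (f b), q.IsPath ∧ q.length = p.length ∧ q.support = p.support.map f := by
  suffices ∃ q : G.Walk (f a) (f b), q.support = p.support.map f by
    obtain ⟨q, hq⟩ := this
    refine ⟨q, .mk' (hq ▸ List.Nodup.map_on (fun u hu w hw => hf.injOn (hpS u hu) (hpS w hw))
      hp.support_nodup), ?_, hq⟩
    simpa using congrArg List.length hq
  clear hp
  induction p with
  | nil => exact ⟨.nil, by simp⟩
  | cons h p ih =>
    simp only [Walk.support_cons, List.forall_mem_cons] at hpS
    obtain ⟨q, hq⟩ := ih hpS.2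
    exact ⟨.cons (hf.map_adj _ hpS.1 _ (hpS.2 _ p.start_mem_support) h) q, by simp [hq]⟩

theorem length_lt_card_of_isPath {a b : V} {p : H.Walk a b} (hp : p.IsPath)
    (hpS : ∀ z ∈ p.support, z ∈ S) : p.length < #S := by
  rw [← Nat.succ_le_iff, Nat.succ_eq_add_one, ← p.length_support,
    ← List.toFinset_card_of_nodup hp.support_nodup]
  exact card_le_card fun z hz => hpS z (List.mem_toFinset.1 hz)

theorem exists_forall_getVert_eq {a b : V} {p : H.Walk a b} (hp : p.IsPath) (f : V → U)
    (r : ℕ → U) :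
    ∃ g : V → U, (∀ i ≤ p.length, g (p.getVert i) = r i) ∧ ∀ u ∉ p.support, g u = f u := by
  refine ⟨fun u => if u ∈ p.support then r (p.support.idxOf u) else f u, fun i hi => ?_,
    fun u hu => if_neg hu⟩
  have hmem := p.getVert_mem_support i
  have hidx := List.idxOf_lt_length_of_mem hmem
  rw [p.length_support] at hidx
  exact (if_pos hmem).trans
    (congrArg r (hp.getVert_injOn (Nat.le_of_lt_succ hidx) hi (p.getVert_support_idxOf hmem)))

theorem exists_map_getVert_eq_getVert {a b : V} {p : H.Walk a b} (hp : p.IsPath)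
    (q : G.Walk (f a) (f b)) (hlen : q.length = p.length) :
    ∃ g : V → U, (∀ i ≤ p.length, g (p.getVert i) = q.getVert i) ∧
      (∀ u ∈ p.support, g u ∈ q.support) ∧
      ∀ u, (u ∈ p.support → u = a ∨ u = b) → g u = f u := by
  obtain ⟨g, hg_getVert, hg_notMem⟩ := exists_forall_getVert_eq hp f q.getVert
  refine ⟨g, hg_getVert, fun u hu => ?_, fun u hu => ?_⟩
  · obtain ⟨i, rfl, hi⟩ := Walk.mem_support_iff_exists_getVert.1 hu
    exact hg_getVert i hi ▸ q.getVert_mem_support i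
  · by_cases hmem : u ∈ p.support
    · rcases hu hmem with rfl | rfl
      · simpa using hg_getVert 0 (Nat.zero_le _)
      · have hend := hg_getVert p.length le_rfl
        rwa [p.getVert_length, ← hlen, q.getVert_length] at hend
    · exact hg_notMem u hmem

theorem EmbedsOn.exists_of_isPath {a b : V} {p : H.Walk a b} (hp : p.IsPath)
    (hinterior : ∀ u ∈ p.support, u ≠ a → u ≠ b → ∀ w ∈ S, H.Adj u w → s(u, w) ∈ p.edges)
    (hf : EmbedsOn H G {u ∈ S | u ∈ p.support → u = a ∨ u = b} f)
    {q : G.Walk (f a) (f b)} (hq : q.IsPath) (hlen : q.length = p.length)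
    (hdisj : ∀ u ∈ S, u ∉ p.support → f u ∉ q.support) : ∃ g, EmbedsOn H G S g := by
  obtain ⟨g, hg_getVert, hg_mem, hg_eq⟩ := exists_map_getVert_eq_getVert hp q hlen
  refine ⟨g, fun u hu w hw huw => ?_, fun u hu w hw huw => ?_⟩
  · by_cases hup : u ∈ p.support <;> by_cases hwp : w ∈ p.support
    · obtain ⟨i, rfl, hi⟩ := Walk.mem_support_iff_exists_getVert.1 hup
      obtain ⟨j, rfl, hj⟩ := Walk.mem_support_iff_exists_getVert.1 hwp
      rw [hg_getVert i hi, hg_getVert j hj] at huw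
      rw [hq.getVert_injOn (hi.trans hlen.ge) (hj.trans hlen.ge) huw]
    · exact absurd (huw ▸ hg_mem u hup) (hg_eq w (absurd · hwp) ▸ hdisj w hw hwp)
    · exact absurd (huw ▸ hg_mem w hwp) (hg_eq u (absurd · hup) ▸ hdisj u hu hup)
    · rw [hg_eq u (absurd · hup), hg_eq w (absurd · hwp)] at huw
      exact hf.injOn (by simp_all) (by simp_all) huw
  · by_cases hedge : s(u, w) ∈ p.edges
    · obtain ⟨i, hi, heq⟩ := (p.mk_mem_edges_iff_exists).1 hedge
      have hadj := q.adj_getVert_succ (hi.trans_eq hlen.symm)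
      rw [← hg_getVert i hi.le, ← hg_getVert (i + 1) hi] at hadj
      rcases Sym2.eq_iff.1 heq with ⟨rfl, rfl⟩ | ⟨rfl, rfl⟩
      exacts [hadj, hadj.symm]
    · have hu_end (hup : u ∈ p.support) : u = a ∨ u = b := by
        by_contra! h
        exact hedge (hinterior u hup h.1 h.2 w hw huw)
      have hw_end (hwp : w ∈ p.support) : w = a ∨ w = b := by
        by_contra! h
        exact hedge (Sym2.eq_swap ▸ hinterior w hwp h.1 h.2 u hu huw.symm)
      rw [hg_eq u hu_end, hg_eq w hw_end]
      exact hf.map_adj u (mem_filter.2 ⟨hu, hu_end⟩) w (mem_filter.2 ⟨hw, hw_end⟩) huw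

theorem EmbedsOn.of_le {H' : SimpleGraph V} (hf : EmbedsOn H' G S f) (h : H ≤ H') :
    EmbedsOn H G S f where
  injOn := hf.injOn
  map_adj u hu w hw huw := hf.map_adj u hu w hw (h huw)

variable {a b c d : V} {hab : H.Adj a b} {hbc : H.Adj b c} {p : H.Walk c d}

theorem EmbedsOn.exists_of_erase_of_isPath (hp : (Walk.cons hab (.cons hbc p)).IsPath)
    (hpS : ∀ u ∈ a :: b :: p.support, u ∈ S ∧ degIn H S u = 2) (hf : EmbedsOn H G (S.erase b) f)
    {q : G.Walk (f a) (f d)} (hq : q.IsPath) (hlen : q.length = p.length + 2) {v : U}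
    (hv : ∀ u ∈ S.erase b, f u ≠ v)
    (hsupp : ∀ z ∈ q.support, z = v ∨ z ∈ (a :: p.support).map f) : ∃ g, EmbedsOn H G S g := by
  have hb : b ∉ a :: p.support := by
    have := hp.support_nodup
    simp_all [eq_comm]
  have hmem (u) (hu : u ∈ a :: p.support) : u ∈ S.erase b :=
    mem_erase.2 ⟨ne_of_mem_of_not_mem hu hb, (hpS u (by simp at hu ⊢; tauto)).1⟩
  refine EmbedsOn.exists_of_isPath hp ?_ (hf.mono fun u hu => ?_) hq (by simpa) ?_
  · intro u hu hua hud w hw huw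
    exact mem_edges_of_degIn_le_two hp (fun z hz => (hpS z (by simpa using hz)).1) hu hua hud
      (hpS u (by simpa using hu)).2.le hw huw
  · refine mem_erase.2 ⟨?_, (mem_filter.1 hu).1⟩
    rintro rfl
    rcases (mem_filter.1 hu).2 (by simp) with rfl | rfl <;> simp at hb
  · intro u hu hup hfu
    simp only [Walk.support_cons, List.mem_cons, not_or] at hup
    have huS : u ∈ S.erase b := mem_erase.2 ⟨hup.2.1, hu⟩
    rcases hsupp _ hfu with hfv | hfu
    · exact hv u huS hfv
    · obtain ⟨w, hw, hwu⟩ := List.mem_map.1 hfu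
      obtain rfl := hf.injOn (hmem w hw) huS hwu
      simp_all

theorem EmbedsOn.exists_of_sup_edge [Fintype U] {C : SimpleGraph U} {k : ℕ} (hk : 3 ≤ k)
    (hodd : Odd k) (hfree : (cycleGraph k).Free C) (hp : (Walk.cons hab (.cons hbc p)).IsPath)
    (hpS : ∀ u ∈ a :: b :: p.support, u ∈ S ∧ degIn H S u = 2)
    (hlen : 3 * k ≤ p.length + 2) (hcard : 2 * #S ≤ Fintype.card U + 1)
    (hf : EmbedsOn (H ⊔ edge a c) Cᶜ (S.erase b) f) : ∃ g, EmbedsOn H Cᶜ S g := by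
  obtain ⟨⟨hab_ne, hap⟩, hbp, hp'⟩ : (a ≠ b ∧ a ∉ p.support) ∧ b ∉ p.support ∧ p.IsPath := by
    simpa [Walk.isPath_def] using hp.support_nodup
  have hmem (z) (hz : z ∈ a :: p.support) : z ∈ S.erase b := by
    refine mem_erase.2 ⟨?_, (hpS z (by simp at hz ⊢; tauto)).1⟩
    rintro rfl
    simp_all
  have hac : (H ⊔ edge a c).Adj a c :=
    Or.inr ((edge_adj _ _ _ _).2 ⟨by simp, fun h => hap (h ▸ p.start_mem_support)⟩)
  obtain ⟨q, hq, hq_len, hq_supp⟩ :=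
    hf.exists_isPath ((hp'.mapLe le_sup_left).cons (h := hac) (by simpa)) (by simpa using hmem)
  simp only [Walk.support_cons, Walk.support_mapLe_eq_support, Walk.length_cons,
    Walk.length_mapLe] at hq_supp hq_len
  set Z := ((S.erase b).image f)ᶜ with hZ
  have hcardS : #S ≤ #Z := by
    have := card_image_le (s := S.erase b) (f := f)
    rw [card_erase_of_mem (hpS b (by simp)).1] at this
    rw [hZ, card_compl]
    omega
  have hk_card := length_lt_card_of_isPath hp' fun z hz => (hpS z (by simp [hz])).1
  have hZ_disj (z) (hz : z ∈ Z) (hzq : z ∈ q.support) : False := by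
    obtain ⟨u, hu, rfl⟩ := List.mem_map.1 (hq_supp ▸ hzq)
    exact mem_compl.1 hz (mem_image_of_mem f (hmem u hu))
  obtain hindep | ⟨v, hv, q', hq', hq'_len, hq'_supp⟩ :=
    isIndepSet_or_exists_isPath_insert hk hodd hfree hq (by omega) hZ_disj (by omega)
  · have : Nonempty U := ⟨f a⟩
    exact exists_embedsOn_compl_of_isIndepSet H hindep hcardS
  · exact (hf.of_le le_sup_left).exists_of_erase_of_isPath hp hpS hq' (by omega) (v := v)
      (fun u hu hfu => mem_compl.1 hv (hfu ▸ mem_image_of_mem f hu)) (hq_supp ▸ hq'_supp)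

end Suppression

section Reductions

variable {H : SimpleGraph V} {S M : Finset V} {a b c u v w : V}

theorem eq_of_degIn_eq_one (hu : degIn H S u = 1) (hv : v ∈ S) (hw : w ∈ S) (huv : H.Adj u v)
    (huw : H.Adj u w) : v = w :=
  card_le_one.1 hu.le v (by simp [hv, huv]) w (by simp [hw, huw])

theorem eq_or_eq_of_degIn_eq_two (hb : degIn H S b = 2) (ha : a ∈ S) (hc : c ∈ S) (hw : w ∈ S)
    (hac : a ≠ c) (hba : H.Adj b a) (hbc : H.Adj b c) (hbw : H.Adj b w) : w = a ∨ w = c := by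
  by_contra! hne
  have hsub : {w, a, c} ⊆ ({w ∈ S | H.Adj b w} : Finset V) := by
    simp [insert_subset_iff, *]
  have hle := (card_le_card hsub).trans_eq hb
  rw [card_eq_three.2 ⟨w, a, c, hne.1, hne.2, hac, rfl⟩] at hle
  omega

theorem connectedOn_univ [Fintype V] (hH : H.Connected) : ConnectedOn H univ := by
  rintro T - ⟨a, ha⟩ hT
  obtain ⟨b, hb⟩ : ∃ b, b ∉ T := by
    by_contra! h
    exact hT (eq_univ_iff_forall.2 h)
  obtain ⟨p⟩ := hH.preconnected a b
  obtain ⟨d, -, hfst, hsnd⟩ := p.exists_boundary_dart T ha hb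
  exact ⟨d.fst, hfst, d.snd, mem_univ _, hsnd, d.adj⟩

theorem degSum_univ [Fintype V] (H : SimpleGraph V) [DecidableRel H.Adj] :
    degSum H univ = 2 * #H.edgeFinset := by
  rw [← H.sum_degrees_eq_twice_card_edges]
  refine sum_congr rfl fun u _ => ?_
  rw [degIn, ← card_neighborFinset_eq_degree, neighborFinset_eq_filter]
  congr

theorem ConnectedOn.sdiff (hconn : ConnectedOn H S) (hM : ∀ u ∈ M, degIn H S u = 1) :
    ConnectedOn H (S \ M) := by
  intro T hT hne hTS
  obtain ⟨s, hs, hsT⟩ := exists_of_ssubset (hT.ssubset_of_ne hTS)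
  obtain ⟨hsS, hsM⟩ := mem_sdiff.1 hs
  obtain ⟨u, hu, w, hw, hwT, huw⟩ := hconn (T ∪ {u ∈ S ∩ M | ∃ a ∈ T, H.Adj u a})
    (union_subset (hT.trans sdiff_subset) ((filter_subset _ _).trans inter_subset_left))
    (hne.mono subset_union_left)
    (fun h => by simpa [hsT, hsM] using h.symm.subset hsS)
  simp only [mem_union, mem_filter, mem_inter, not_or] at hu hwT
  rcases hu with hu | ⟨⟨-, huM⟩, a, ha, hua⟩
  · exact ⟨u, hu, w, mem_sdiff.2 ⟨hw, fun hwM => hwT.2 ⟨⟨hw, hwM⟩, u, hu, huw.symm⟩⟩, hwT.1, huw⟩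
  · have haw := eq_of_degIn_eq_one (hM u huM) (mem_sdiff.1 (hT ha)).1 hw hua huw
    exact absurd (haw ▸ ha) hwT.1

theorem ConnectedOn.sup_edge_erase (hconn : ConnectedOn H S) (ha : a ∈ S) (hb : b ∈ S)
    (hc : c ∈ S) (hac : a ≠ c) (hba : H.Adj b a) (hbc : H.Adj b c) (hdeg : degIn H S b = 2) :
    ConnectedOn (H ⊔ edge a c) (S.erase b) := by
  have hnbr : ∀ w ∈ S, H.Adj b w → w = a ∨ w = c := fun w hw =>
    eq_or_eq_of_degIn_eq_two hdeg ha hc hw hac hba hbc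
  have haS : a ∈ S.erase b := mem_erase.2 ⟨hba.ne', ha⟩
  have hcS : c ∈ S.erase b := mem_erase.2 ⟨hbc.ne', hc⟩
  have hadj : (H ⊔ edge a c).Adj a c := by simp [edge_adj, hac]
  intro T hT hne hTS
  have hTS' : T ⊆ S := hT.trans (erase_subset _ _)
  have hbT : b ∉ T := fun h => notMem_erase b S (hT h)
  by_cases haT : a ∈ T <;> by_cases hcT : c ∈ T
  · obtain ⟨u, hu, w, hw, hwT, huw⟩ := hconn (insert b T) (insert_subset hb hTS')
      (insert_nonempty _ _) (fun h => hTS (by rw [← h, erase_insert hbT]))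
    rw [mem_insert, not_or] at hwT
    rcases mem_insert.1 hu with rfl | hu
    · rcases hnbr w hw huw with rfl | rfl
      · exact absurd haT hwT.2
      · exact absurd hcT hwT.2
    · exact ⟨u, hu, w, mem_erase.2 ⟨hwT.1, hw⟩, hwT.2, Or.inl huw⟩
  · exact ⟨a, haT, c, hcS, hcT, hadj⟩
  · exact ⟨c, hcT, a, haS, haT, hadj.symm⟩
  · obtain ⟨u, hu, w, hw, hwT, huw⟩ := hconn T hTS' hne (fun h => hbT (h ▸ hb))
    refine ⟨u, hu, w, mem_erase.2 ⟨?_, hw⟩, hwT, Or.inl huw⟩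
    rintro rfl
    rcases hnbr u (hTS' hu) huw.symm with rfl | rfl
    · exact haT hu
    · exact hcT hu

theorem degSum_sup_edge_le (H : SimpleGraph V) (S : Finset V) (a c : V) :
    degSum (H ⊔ edge a c) S ≤ degSum H S + 2 := by
  have hdeg : ∀ u ∈ S, degIn (H ⊔ edge a c) S u ≤
      degIn H S u + ((if u = a then 1 else 0) + if u = c then 1 else 0) := by
    intro u _
    have hle : degIn (H ⊔ edge a c) S u ≤ #({w ∈ S | H.Adj u w} ∪
        ((if u = a then {c} else ∅) ∪ if u = c then {a} else ∅)) := by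
      refine card_le_card fun w hw => ?_
      simp only [mem_filter, sup_adj, edge_adj] at hw
      simp only [mem_union, mem_filter]
      rcases hw with ⟨hw, h | ⟨⟨rfl, rfl⟩ | ⟨rfl, rfl⟩, -⟩⟩ <;> simp [*]
    refine hle.trans ((card_union_le _ _).trans ?_)
    refine Nat.add_le_add_left ((card_union_le _ _).trans (Nat.add_le_add ?_ ?_)) _ <;>
      split_ifs <;> simp
  have hone : ∀ b : V, ∑ u ∈ S, (if u = b then 1 else 0) ≤ 1 := by
    intro b
    rw [sum_ite_eq']
    split_ifs <;> simp
  calc degSum (H ⊔ edge a c) S ≤ _ := sum_le_sum hdeg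
    _ ≤ degSum H S + (1 + 1) := by
      rw [sum_add_distrib, sum_add_distrib]
      exact Nat.add_le_add_left (Nat.add_le_add (hone a) (hone c)) _

end Reductions

section Leaves

variable {H : SimpleGraph V} {S : Finset V} {u v w : V}

theorem leaves_subset : leaves H S ⊆ S := filter_subset _ _

theorem degIn_of_mem_leaves (hu : u ∈ leaves H S) : degIn H S u = 1 := (mem_filter.1 hu).2

theorem ConnectedOn.notMem_leaves_of_adj (hconn : ConnectedOn H S) (hS : 2 < #S)
    (hu : u ∈ leaves H S) (hv : v ∈ S) (huv : H.Adj u v) : v ∉ leaves H S := by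
  intro hvL
  obtain ⟨x, hx, w, hw, hwT, hxw⟩ := hconn {u, v}
    (insert_subset (leaves_subset hu) (by simpa using hv)) (insert_nonempty _ _)
    (fun h => absurd (h ▸ hS) card_le_two.not_gt)
  simp only [mem_insert, mem_singleton, not_or] at hx hwT
  rcases hx with rfl | rfl
  · exact hwT.2 (eq_of_degIn_eq_one (degIn_of_mem_leaves hu) hw hv hxw huv)
  · exact hwT.1 (eq_of_degIn_eq_one (degIn_of_mem_leaves hvL) hw (leaves_subset hu) hxw huv.symm)

theorem ConnectedOn.exists_parent (hconn : ConnectedOn H S) (hS : 2 < #S) :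
    ∃ p : V → V, ∀ u ∈ leaves H S,
      p u ∈ S \ leaves H S ∧ H.Adj u (p u) ∧ ∀ w ∈ S, H.Adj u w → w = p u := by
  have hparent : ∀ u, ∃ v, u ∈ leaves H S →
      v ∈ S \ leaves H S ∧ H.Adj u v ∧ ∀ w ∈ S, H.Adj u w → w = v := by
    intro u
    by_cases hu : u ∈ leaves H S
    · have hdeg := degIn_of_mem_leaves hu
      obtain ⟨v, hv⟩ := card_pos.1 (hdeg.symm ▸ one_pos : 0 < degIn H S u)
      obtain ⟨hvS, huv⟩ := mem_filter.1 hv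
      exact ⟨v, fun _ => ⟨mem_sdiff.2 ⟨hvS, hconn.notMem_leaves_of_adj hS hu hvS huv⟩, huv,
        fun w hw huw => eq_of_degIn_eq_one hdeg hw hvS huw huv⟩⟩
    · exact ⟨u, fun h => absurd h hu⟩
  exact ⟨fun u => (hparent u).choose, fun u hu => (hparent u).choose_spec hu⟩

end Leaves

section LargeGraphs

variable {H : SimpleGraph V} {C : SimpleGraph U} {S : Finset V} {Y Z : Finset U}
  {k n ℓ : ℕ}

theorem mul_card_filter_lt_degIn_le {x : U} (hk : 3 ≤ k) (hfree : (cycleGraph k).Free C)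
    (hY : ∀ y ∈ Y, C.Adj x y) : 50 * k * #{y ∈ Y | 100 * k ^ 2 < degIn C Y y} ≤ #Y := by
  have hmul : 2 * k * (50 * k * #{y ∈ Y | 100 * k ^ 2 < degIn C Y y}) ≤ 2 * k * #Y := calc
    _ = #{y ∈ Y | 100 * k ^ 2 < degIn C Y y} * (100 * k ^ 2) := by ring
    _ ≤ degSum C Y := card_filter_lt_degIn_mul_le_degSum C Y _
    _ ≤ 2 * k * #Y := degSum_le_of_subset_neighborSet hk hfree hY
  exact Nat.le_of_mul_le_mul_left hmul (by omega)

theorem mul_le_of_mul_sq_mul_le (hk : 3 ≤ k) (hℓ : 64 * k ^ 2 * ℓ ≤ n) : 576 * ℓ ≤ n := calc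
  576 * ℓ = 64 * 3 ^ 2 * ℓ := by ring
  _ ≤ 64 * k ^ 2 * ℓ := by gcongr
  _ ≤ n := hℓ

theorem nine_mul_le_of_sq_le {d : ℕ} (hk : 3 ≤ k) (hn : (10 * k) ^ 4 ≤ n)
    (hℓ : 64 * k ^ 2 * ℓ ≤ n) (hd : d ^ 2 ≤ 6 * ℓ) : 9 * (d * (100 * k ^ 2)) ≤ n := by
  have hℓ' := mul_le_of_mul_sq_mul_le hk hℓ
  rw [← Nat.pow_le_pow_iff_left two_ne_zero]
  calc (9 * (d * (100 * k ^ 2))) ^ 2 = 81 * (d ^ 2 * (10 * k) ^ 4) := by ring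
    _ ≤ 81 * (6 * ℓ * n) := by gcongr
    _ = 486 * ℓ * n := by ring
    _ ≤ n ^ 2 := by nlinarith

theorem exists_embedsOn_compl_of_degIn_le_of_card_le [Nonempty U] (hk : 3 ≤ k)
    (hn : (10 * k) ^ 4 ≤ n) (hℓ : 64 * k ^ 2 * ℓ ≤ n) (hS : SparseOn H S ℓ)
    (hZ : ∀ z ∈ Z, degIn C Z z ≤ 100 * k ^ 2) (hnZ : n ≤ 2 * #Z)
    (hSZ : #S + 2 * (100 * k ^ 2) ≤ #Z) : ∃ f, EmbedsOn H Cᶜ S f ∧ Set.MapsTo f S Z := by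
  refine exists_embedsOn_compl_of_degIn_le hZ hS fun d m hdm hm hle => ?_
  rcases le_or_gt d 2 with hd | hd
  · calc m + d * (100 * k ^ 2) ≤ #S + 2 * (100 * k ^ 2) := by gcongr
      _ ≤ #Z := hSZ
  · have hdm' : d * m ≤ 6 * ℓ := by nlinarith
    have hm' : 3 * m ≤ d * m := Nat.mul_le_mul_right _ hd
    have hℓ' := mul_le_of_mul_sq_mul_le hk hℓ
    have hdΔ := nine_mul_le_of_sq_le hk hn hℓ (d := d) (by nlinarith)
    omega

end LargeGraphs

section Slack

variable {k n ℓ s L h : ℕ}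

theorem le_mul_sub_add (hk : 3 ≤ k) (hℓ : 64 * k ^ 2 * ℓ ≤ n) (hs : s ≤ n)
    (hL : s ≤ (12 * k + 2) * L + (18 * k + 2) * ℓ) : n ≤ 15 * k * (n - s + L) := by
  have hℓ' : 10 * ((18 * k + 2) * ℓ) ≤ n := calc
    10 * ((18 * k + 2) * ℓ) = (180 * k + 20) * ℓ := by ring
    _ ≤ 64 * k ^ 2 * ℓ := Nat.mul_le_mul_right _ (by nlinarith)
    _ ≤ n := hℓ
  have hx : 10 * (12 * k + 2) * (n - s + L) ≤ 130 * k * (n - s + L) :=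
    Nat.mul_le_mul_right _ (by omega)
  have hsub : n - s ≤ (12 * k + 2) * (n - s) := Nat.le_mul_of_pos_left _ (by omega)
  have hle : n ≤ (12 * k + 2) * (n - s + L) + (18 * k + 2) * ℓ := by
    rw [mul_add]
    omega
  linarith

theorem two_mul_add_le (hk : 3 ≤ k) (hn : (10 * k) ^ 4 ≤ n) (hℓ : 64 * k ^ 2 * ℓ ≤ n)
    (hs : s ≤ n) (hL : s ≤ (12 * k + 2) * L + (18 * k + 2) * ℓ) (hh : 50 * k * h ≤ 2 * n) :
    2 * s + k * (100 * k ^ 2 + 1) + 3 * (100 * k ^ 2) + 1 + h ≤ 2 * n + L := by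
  have hx := le_mul_sub_add hk hℓ hs hL
  have hpoly : 15 * k * (k * (100 * k ^ 2 + 1) + 3 * (100 * k ^ 2) + 1) ≤ 4000 * k ^ 4 := by
    obtain ⟨j, rfl⟩ := Nat.exists_eq_add_of_le hk
    ring_nf
    gcongr <;> norm_num
  have hmul : 15 * k * (k * (100 * k ^ 2 + 1) + 3 * (100 * k ^ 2) + 1 + h) ≤
      15 * k * (n - s + L) := by
    linarith
  have := Nat.le_of_mul_le_mul_left hmul (by omega)
  omega

theorem two_mul_add_le_of_mul_le (hk : 3 ≤ k) (hn : (10 * k) ^ 4 ≤ n) (hh : 50 * k * h ≤ 2 * n) :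
    2 * (100 * k ^ 2) + k + 2 + 2 * h ≤ n := by
  have hh' : 50 * 3 * h ≤ 50 * k * h := by gcongr
  have hk4 : 10000 * 3 ^ 2 * k ^ 2 ≤ (10 * k) ^ 4 := calc
    10000 * 3 ^ 2 * k ^ 2 ≤ 10000 * k ^ 2 * k ^ 2 := by gcongr
    _ = (10 * k) ^ 4 := by ring
  nlinarith

end Slack

section Star

variable {H : SimpleGraph V} {C : SimpleGraph U} {S : Finset V} {X Y : Finset U}
  {f : V → U} {k n ℓ : ℕ}

theorem degIn_add_degIn_compl [Fintype U] (C : SimpleGraph U) (X : Finset U) (y : U) :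
    degIn C X y + degIn C Xᶜ y = degIn C univ y := by
  unfold degIn
  rw [← card_union_of_disjoint (disjoint_filter_filter disjoint_compl_right), ← filter_union,
    union_compl]

theorem EmbedsOn.exists_of_star [Fintype U] {L : Finset V} {p : V → V} {v : V} {w : U} {Δ : ℕ}
    (hf : EmbedsOn H Cᶜ ((S \ L).erase v) f) (hfw : ∀ s ∈ (S \ L).erase v, Cᶜ.Adj (f s) w)
    (hfY : ∀ s ∈ (S \ L).erase v, degIn C Y (f s) ≤ Δ) (hL : L ⊆ S) (hv : v ∈ S \ L)
    (hp : ∀ u ∈ L, p u ∈ S \ L) (hadj : ∀ u ∈ L, ∀ x ∈ S, H.Adj u x → x = p u)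
    (hY : #S + Δ ≤ #Y + #{u ∈ L | p u = v}) (hw : #S + degIn C univ w ≤ Fintype.card U) :
    ∃ g, EmbedsOn H Cᶜ S g := by
  have hcard := card_sdiff_add_card_eq_card hL
  have hcardL : #{u ∈ L | p u = v} + #{u ∈ L | p u ≠ v} = #L := card_filter_add_card_filter_not _
  have hfv := hf.update (notMem_erase v _) (fun s hs => (hfw s hs).ne) (fun s hs _ => hfw s hs)
  rw [insert_erase hv] at hfv
  obtain ⟨g, hg, hgf⟩ := hfv.exists_union_leaves (M := {u ∈ L | p u ≠ v}) (p := p)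
    (m := #(S \ L) + #{u ∈ L | p u ≠ v}) (Z := Y)
    (disjoint_sdiff_self_left.mono_right (filter_subset _ _))
    (fun u hu => hp u (mem_filter.1 hu).1)
    (fun u hu x hx => hadj u (mem_filter.1 hu).1 x
      (union_subset sdiff_subset ((filter_subset _ _).trans hL) hx)) le_rfl
    (fun u hu => by
      obtain ⟨hu, huv⟩ := mem_filter.1 hu
      have := hfY (p u) (mem_erase.2 ⟨huv, hp u hu⟩)
      rw [Function.update_of_ne huv]
      omega)
  have hunion : S \ L ∪ {u ∈ L | p u ≠ v} ∪ {u ∈ L | p u = v} = S := by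
    rw [union_assoc, union_comm (filter _ _), filter_union_filter_not_eq,
      sdiff_union_of_subset hL]
  obtain ⟨g', hg', -⟩ := hg.exists_union_leaves (M := {u ∈ L | p u = v}) (p := p)
    (m := #S) (Z := univ)
    (disjoint_union_left.2 ⟨disjoint_sdiff_self_left.mono_right (filter_subset _ _),
      (disjoint_filter_filter_not _ _ _).symm⟩)
    (fun u hu => mem_union_left _ (hp u (mem_filter.1 hu).1))
    (fun u hu x hx => hadj u (mem_filter.1 hu).1 x (hunion ▸ hx))
    (by have := card_union_le (S \ L) {u ∈ L | p u ≠ v}; omega)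
    (fun u hu => by
      rw [(mem_filter.1 hu).2, hgf hv, Function.update_self]
      exact hw)
  exact ⟨g', hunion ▸ hg'⟩

theorem degIn_add_degIn_le (C : SimpleGraph U) (X : Finset U) (a b : U) :
    degIn C X a + degIn C X b ≤ #{z ∈ X | C.Adj a z ∧ C.Adj b z} + #X := by
  unfold degIn
  rw [← card_union_add_card_inter, ← filter_and, add_comm]
  exact Nat.add_le_add_left (card_le_card (union_subset (filter_subset _ _) (filter_subset _ _))) _

theorem isIndepSet_of_common_neighbors_of_le_degIn {A B : Finset U} {x : U} (hk : 3 ≤ k)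
    (hodd : Odd k) (hfree : (cycleGraph k).Free C) (hY : ∀ y ∈ Y, C.Adj x y) (hAY : A ⊆ Y)
    (hA : k ≤ #A) (hxB : x ∉ B)
    (hcommon : ∀ a ∈ A, ∀ b ∈ A, k ≤ #{z ∈ B | C.Adj a z ∧ C.Adj b z})
    (hdeg : ∀ y ∈ Y \ A, k ≤ degIn C Y y) : C.IsIndepSet (Y : Set U) := by
  have hxY : x ∉ Y := fun h => (hY x h).ne rfl
  have hYA : ∀ y ∈ Y, ∀ y' ∈ A, ¬ C.Adj y y' := fun y hy y' hy' hadj =>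
    hfree <| cycleGraph_isContained_of_common_neighbors hk hodd hA hcommon hy' hadj
      fun a ha p _ hp => ⟨x, fun hxp => by
        rcases hp x hxp with rfl | h | h
        exacts [hxY hy, hxY (hAY h), hxB h], hY a (hAY ha), hY y hy⟩
  suffices Y \ A = ∅ from fun y hy y' hy' _ => hYA y hy y' (sdiff_eq_empty_iff_subset.1 this hy')
  by_contra! hne
  obtain ⟨t, ht, hlt⟩ := exists_degIn_lt_of_subset_neighborSet hk hfree
    (fun y hy => hY y (mem_sdiff.1 hy).1) hne
  have hle : degIn C Y t ≤ degIn C (Y \ A) t := card_le_card fun z hz => by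
    simp only [mem_filter, mem_sdiff] at hz ⊢
    exact ⟨⟨hz.1, fun hzA => hYA t (mem_sdiff.1 ht).1 z hzA hz.2⟩, hz.2⟩
  exact absurd (hdeg t ht) (by omega)

theorem isIndepSet_compl_of_lt_card_add_degIn [Fintype U] {x : U} (hk : 3 ≤ k) (hodd : Odd k)
    (hfree : (cycleGraph k).Free C) (hXc : ∀ y ∈ Xᶜ, C.Adj x y)
    (hcard : k + 2 * (100 * k ^ 2) ≤ #X + 1) (hX : 2 * #X + 1 ≤ Fintype.card U)
    (hlow : k ≤ #{y ∈ Xᶜ | degIn C Xᶜ y ≤ 100 * k ^ 2})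
    (hdeg : ∀ y ∈ Xᶜ, degIn C Xᶜ y ≤ 100 * k ^ 2 → Fintype.card U ≤ #X + degIn C univ y) :
    C.IsIndepSet ((Xᶜ : Finset U) : Set U) := by
  refine isIndepSet_of_common_neighbors_of_le_degIn hk hodd hfree hXc (filter_subset _ _) hlow
    (notMem_erase x X) (fun a ha b hb => ?_) (fun y hy => ?_)
  · obtain ⟨ha, ha'⟩ := mem_filter.1 ha
    obtain ⟨hb, hb'⟩ := mem_filter.1 hb
    have hab := degIn_add_degIn_le C X a b
    have herase : #{z ∈ X | C.Adj a z ∧ C.Adj b z} ≤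
        #{z ∈ X.erase x | C.Adj a z ∧ C.Adj b z} + 1 := by
      rw [filter_erase]
      exact tsub_le_iff_right.1 pred_card_le_card_erase
    have hmissa := hdeg a ha ha'
    have hmissb := hdeg b hb hb'
    rw [← degIn_add_degIn_compl C X] at hmissa hmissb
    omega
  · simp only [mem_sdiff, mem_filter, not_and, not_le] at hy
    have := hy.2 hy.1
    nlinarith

theorem exists_embedsOn_compl_of_star [Fintype U] [Nonempty U] {v : V} {w : U} (hk : 3 ≤ k)
    (hn : (10 * k) ^ 4 ≤ n) (hℓ : 64 * k ^ 2 * ℓ ≤ n) (hconn : ConnectedOn H S)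
    (hsparse : SparseOn H S ℓ) (hv : v ∈ S)
    (hstar : 100 * k ^ 2 + 2 ≤ #{u ∈ leaves H S | H.Adj u v}) (hSY : #S ≤ #Y)
    (hw : degIn C Y w ≤ 100 * k ^ 2) (hwU : #S + degIn C univ w ≤ Fintype.card U)
    (hnY : n + 2 * (100 * k ^ 2 + 1) ≤ 2 * #{y ∈ Y | degIn C Y y ≤ 100 * k ^ 2})
    (hSL : #S + 3 * (100 * k ^ 2) ≤
      #{y ∈ Y | degIn C Y y ≤ 100 * k ^ 2} + #(leaves H S)) :
    ∃ g, EmbedsOn H Cᶜ S g := by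
  set L := leaves H S
  set A := {y ∈ Y | degIn C Y y ≤ 100 * k ^ 2}
  have hLS : L ⊆ S := leaves_subset
  have hstarS : #{u ∈ L | H.Adj u v} ≤ degIn H S v :=
    card_le_card fun u hu => mem_filter.2 ⟨hLS (mem_filter.1 hu).1, (mem_filter.1 hu).2.symm⟩
  have hvL : v ∈ S \ L := mem_sdiff.2 ⟨hv, fun h => by
    have := degIn_of_mem_leaves h
    omega⟩
  obtain ⟨p, hp⟩ := hconn.exists_parent (by have := degIn_lt_card (G := H) hv; omega)
  set Z := {y ∈ A | ¬ C.Adj w y}.erase w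
  have hZA : Z ⊆ A := (erase_subset _ _).trans (filter_subset _ _)
  have hcardZ : #A ≤ #Z + (100 * k ^ 2 + 1) := by
    have hnot := degIn_add_card_not_adj C A w
    have hle : degIn C A w ≤ degIn C Y w := degIn_mono (filter_subset _ _) w
    have herase : #{y ∈ A | ¬ C.Adj w y} - 1 ≤ #Z := pred_card_le_card_erase
    omega
  have hcardS : #((S \ L).erase v) + #L + 1 = #S := by
    rw [add_right_comm, card_erase_add_one hvL, card_sdiff_add_card_eq_card hLS]
  obtain ⟨f, hf, hfZ⟩ := exists_embedsOn_compl_of_degIn_le_of_card_le hk hn hℓ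
    (hsparse.mono ((erase_subset v (S \ L)).trans sdiff_subset)) (Z := Z)
    (fun z hz => (degIn_mono (hZA.trans (filter_subset _ _)) z).trans
      (mem_filter.1 (hZA hz)).2) (by omega) (by omega)
  refine hf.exists_of_star (p := p) (Y := Y) (w := w) (fun s hs => ?_)
    (fun s hs => (mem_filter.1 (hZA (hfZ hs))).2) hLS hvL (fun u hu => (hp u hu).1)
    (fun u hu => (hp u hu).2.2) ?_ hwU
  · obtain ⟨hne, hs⟩ := mem_erase.1 (hfZ hs)
    exact ⟨hne, fun h => (mem_filter.1 hs).2 h.symm⟩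
  · have hle : #{u ∈ L | H.Adj u v} ≤ #{u ∈ L | p u = v} := card_le_card fun u hu => by
      obtain ⟨hu, huv⟩ := mem_filter.1 hu
      exact mem_filter.2 ⟨hu, ((hp u hu).2.2 v hv huv).symm⟩
    omega

theorem EmbedsOn.exists_of_erase_leaf [Fintype U] [Nonempty U] {u v : V} (hk : 3 ≤ k)
    (hodd : Odd k) (hfree : (cycleGraph k).Free C) (hn : (10 * k) ^ 4 ≤ n)
    (hℓ : 64 * k ^ 2 * ℓ ≤ n) (hU : Fintype.card U + 1 = 2 * n) (hSn : #S ≤ n)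
    (hS : k + 2 * (100 * k ^ 2) ≤ #S) (hconn : ConnectedOn H S) (hsparse : SparseOn H S ℓ)
    (hL : #S ≤ (12 * k + 2) * #(leaves H S) + (18 * k + 2) * ℓ) (hu : u ∈ leaves H S)
    (hv : v ∈ S) (huv : H.Adj u v)
    (hstar : 100 * k ^ 2 + 2 ≤ #{u ∈ leaves H S | H.Adj u v})
    (hf : EmbedsOn H Cᶜ (S.erase u) f) : ∃ g, EmbedsOn H Cᶜ S g := by
  have huS := leaves_subset hu
  set X := (S.erase u).image f with hX
  have hcardX : #X + 1 = #S := by rw [hX, card_image_of_injOn hf.injOn, card_erase_add_one huS]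
  have hcardXc := card_add_card_compl X
  by_cases hblue : ∃ y ∈ Xᶜ, ¬ C.Adj (f v) y
  · obtain ⟨y, hy, hvy⟩ := hblue
    have hfy : ∀ s ∈ S.erase u, f s ≠ y := fun s hs h =>
      mem_compl.1 hy (h ▸ mem_image_of_mem f hs)
    have hg := hf.update (notMem_erase u S) hfy fun s hs hus => ⟨hfy s hs, by
      rwa [eq_of_degIn_eq_one (degIn_of_mem_leaves hu) (mem_of_mem_erase hs) hv hus huv]⟩
    exact ⟨_, insert_erase huS ▸ hg⟩
  push Not at hblue
  have hhigh := mul_card_filter_lt_degIn_le hk hfree hblue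
  have hsplit := card_filter_add_card_filter_not (s := Xᶜ) fun y => degIn C Xᶜ y ≤ 100 * k ^ 2
  simp only [not_le] at hsplit
  have hlarge := two_mul_add_le hk hn hℓ hSn hL (hhigh.trans (by omega))
  have hsmall := two_mul_add_le_of_mul_le hk hn (hhigh.trans (by omega))
  by_cases hw : ∃ w ∈ Xᶜ, degIn C Xᶜ w ≤ 100 * k ^ 2 ∧ #S + degIn C univ w ≤ Fintype.card U
  · obtain ⟨w, -, hw, hwU⟩ := hw
    exact exists_embedsOn_compl_of_star hk hn hℓ hconn hsparse hv hstar (by omega) hw hwU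
      (by omega) (by omega)
  · push Not at hw
    refine exists_embedsOn_compl_of_isIndepSet H (isIndepSet_compl_of_lt_card_add_degIn hk hodd
      hfree hblue (by omega) (by omega) (by omega) fun y hy hlow => ?_) (by omega)
    have := hw y hy hlow
    omega

end Star

section Matching

variable {H : SimpleGraph V} {C : SimpleGraph U} {S L : Finset V} {Y : Finset U}
  {f : V → U} {p : V → V} {k n ℓ : ℕ}

theorem EmbedsOn.exists_of_forall_card_le [Fintype U] (hf : EmbedsOn H Cᶜ (S \ L) f) (hL : L ⊆ S)
    (hp : ∀ u ∈ L, p u ∈ S \ L) (hadj : ∀ u ∈ L, ∀ w ∈ S, H.Adj u w → w = p u)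
    (hhall : ∀ A ⊆ L, #A ≤ #{z ∈ ((S \ L).image f)ᶜ | ∃ u ∈ A, ¬ C.Adj (f (p u)) z}) :
    ∃ g, EmbedsOn H Cᶜ S g := by
  let free : L → Finset U := fun u => {z ∈ ((S \ L).image f)ᶜ | ¬ C.Adj (f (p u)) z}
  have hfree : ∀ A : Finset L, #A ≤ #(A.biUnion free) := fun A => by
    calc #A = #(A.map (Function.Embedding.subtype _)) := (card_map _).symm
      _ ≤ _ := hhall _ (map_subtype_subset A)
      _ ≤ #(A.biUnion free) := card_le_card fun z hz => by
        simpa [free, ← and_assoc, and_comm] using hz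
  obtain ⟨e, he, hefree⟩ := (all_card_le_biUnion_card_iff_exists_injective free).1 hfree
  set e' : V → U := Function.extend Subtype.val e f
  have he' : ∀ u (hu : u ∈ L), e' u = e ⟨u, hu⟩ := fun u hu =>
    Subtype.val_injective.extend_apply e f ⟨u, hu⟩
  have himage : ∀ s ∈ S \ L, ∀ u ∈ L, f s ≠ e' u := fun s hs u hu h => by
    rw [he' u hu] at h
    exact mem_compl.1 (mem_filter.1 (hefree ⟨u, hu⟩)).1 (h ▸ mem_image_of_mem f hs)
  have hleaves : EmbedsOn H Cᶜ L e' := by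
    refine ⟨fun u hu w hw huw => ?_, fun u hu w hw huw => ?_⟩
    · rw [he' u hu, he' w hw] at huw
      exact congrArg Subtype.val (he huw)
    · exact absurd (hadj u hu w (hL hw) huw ▸ hw) (mem_sdiff.1 (hp u hu)).2
  have hunion := hf.union hleaves himage fun s hs u hu hsu => ⟨himage s hs u hu, by
    rw [he' u hu, hadj u hu s (mem_sdiff.1 hs).1 hsu.symm]
    exact (mem_filter.1 (hefree ⟨u, hu⟩)).2⟩
  exact ⟨_, sdiff_union_of_subset hL ▸ hunion⟩

theorem EmbedsOn.exists_or_card_add_lt_card_common_neighbors [Fintype U]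
    (hf : EmbedsOn H Cᶜ (S \ L) f) (hL : L ⊆ S) (hp : ∀ u ∈ L, p u ∈ S \ L)
    (hadj : ∀ u ∈ L, ∀ w ∈ S, H.Adj u w → w = p u) :
    (∃ g, EmbedsOn H Cᶜ S g) ∨ ∃ A ⊆ L, Fintype.card U + #L <
      #{z ∈ ((S \ L).image f)ᶜ | ∀ u ∈ A, C.Adj (f (p u)) z} + #S + #A := by
  refine or_iff_not_imp_left.2 fun hnot => ?_
  have hhall := mt (hf.exists_of_forall_card_le hL hp hadj) hnot
  push Not at hhall
  obtain ⟨A, hAL, hA⟩ := hhall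
  refine ⟨A, hAL, ?_⟩
  have hsplit := card_filter_add_card_filter_not (s := ((S \ L).image f)ᶜ)
    fun z => ∀ u ∈ A, C.Adj (f (p u)) z
  simp only [not_forall, exists_prop] at hsplit
  have hcompl := card_add_card_compl ((S \ L).image f)
  rw [card_image_of_injOn hf.injOn] at hcompl
  have hcardL := card_sdiff_add_card_eq_card hL
  omega

theorem exists_embedsOn_compl_of_subset_neighborSet [Nonempty U] {x : U} {m : ℕ} (hk : 3 ≤ k)
    (hfree : (cycleGraph k).Free C) (hn : (10 * k) ^ 4 ≤ n) (hℓ : 64 * k ^ 2 * ℓ ≤ n)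
    (hY : ∀ y ∈ Y, C.Adj x y) (hYn : #Y ≤ 2 * n) (hSn : #S ≤ n) (hsparse : SparseOn H S ℓ)
    (hm : #S ≤ (12 * k + 2) * m + (18 * k + 2) * ℓ)
    (hcard : 2 * n + m ≤ #Y + #S + k * (100 * k ^ 2 + 1)) : ∃ g, EmbedsOn H Cᶜ S g := by
  have hhigh := (mul_card_filter_lt_degIn_le hk hfree hY).trans hYn
  have hlarge := two_mul_add_le hk hn hℓ hSn hm hhigh
  have hhalf := two_mul_add_le hk hn hℓ le_rfl (L := n) (by nlinarith) hhigh
  have hsplit := card_filter_add_card_filter_not (s := Y) fun y => degIn C Y y ≤ 100 * k ^ 2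
  simp only [not_le] at hsplit
  obtain ⟨g, hg, -⟩ := exists_embedsOn_compl_of_degIn_le_of_card_le hk hn hℓ hsparse
    (Z := {y ∈ Y | degIn C Y y ≤ 100 * k ^ 2})
    (fun z hz => (degIn_mono (filter_subset _ _) z).trans (mem_filter.1 hz).2)
    (by omega) (by omega)
  exact ⟨g, hg⟩

theorem card_le_mul_card_image_of_adj {A T : Finset V} {d : ℕ} (hf : Set.InjOn f T)
    (hpT : ∀ u ∈ A, p u ∈ T) (hadj : ∀ u ∈ A, H.Adj u (p u))
    (hd : ∀ v ∈ T, #{u ∈ A | H.Adj u v} ≤ d) : #A ≤ d * #(A.image (f ∘ p)) := by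
  refine card_le_mul_card_image A _ (forall_mem_image.2 fun u hu => ?_)
  refine (card_le_card fun w hw => ?_).trans (hd (p u) (hpT u hu))
  obtain ⟨hw, hwu⟩ := mem_filter.1 hw
  exact mem_filter.2 ⟨hw, hf (hpT w hw) (hpT u hu) hwu ▸ hadj w hw⟩

theorem EmbedsOn.exists_of_sdiff_leaves [Fintype U] [Nonempty U] (hk : 3 ≤ k)
    (hodd : Odd k) (hfree : (cycleGraph k).Free C) (hn : (10 * k) ^ 4 ≤ n)
    (hℓ : 64 * k ^ 2 * ℓ ≤ n) (hU : Fintype.card U + 1 = 2 * n) (hSn : #S ≤ n)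
    (hS : 2 < #S) (hconn : ConnectedOn H S) (hsparse : SparseOn H S ℓ)
    (hL : #S ≤ (12 * k + 2) * #(leaves H S) + (18 * k + 2) * ℓ)
    (hstar : ∀ v ∈ S, #{u ∈ leaves H S | H.Adj u v} ≤ 100 * k ^ 2 + 1)
    (hf : EmbedsOn H Cᶜ (S \ leaves H S) f) : ∃ g, EmbedsOn H Cᶜ S g := by
  obtain ⟨p, hp⟩ := hconn.exists_parent hS
  obtain hg | ⟨A, hAL, hA⟩ := hf.exists_or_card_add_lt_card_common_neighbors leaves_subset
    (fun u hu => (hp u hu).1) fun u hu => (hp u hu).2.2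
  · exact hg
  set X := (S \ leaves H S).image f with hX
  set Y := {z ∈ Xᶜ | ∀ u ∈ A, C.Adj (f (p u)) z}
  have hcardY : #X + #Y ≤ Fintype.card U :=
    (Nat.add_le_add_left (card_filter_le _ _) _).trans (card_add_card_compl X).le
  have hcardX : #X + #(leaves H S) = #S := by
    rw [hX, card_image_of_injOn hf.injOn, card_sdiff_add_card_eq_card leaves_subset]
  have hcardA := card_le_card hAL
  have hPX : A.image (f ∘ p) ⊆ X := image_subset_iff.2 fun u hu =>
    mem_image_of_mem f (hp u (hAL hu)).1
  have hPY : ∀ x ∈ A.image (f ∘ p), ∀ y ∈ Y, C.Adj x y :=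
    forall_mem_image.2 fun u hu y hy => (mem_filter.1 hy).2 u hu
  rcases le_or_gt k #(A.image (f ∘ p)) with hkP | hPk
  · have hkX := hkP.trans (card_le_card hPX)
    have hindep := isIndepSet_of_common_neighbors hk hodd hfree (A := Y) (B := A.image (f ∘ p))
      (by omega) fun a ha b hb => by
        rwa [filter_true_of_mem fun z hz => ⟨(hPY z hz a ha).symm, (hPY z hz b hb).symm⟩]
    exact exists_embedsOn_compl_of_isIndepSet H hindep (by omega)
  · have hAP : #A ≤ k * (100 * k ^ 2 + 1) := calc
      #A ≤ (100 * k ^ 2 + 1) * #(A.image (f ∘ p)) :=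
        card_le_mul_card_image_of_adj hf.injOn (fun u hu => (hp u (hAL hu)).1)
          (fun u hu => (hp u (hAL hu)).2.1) fun v hv =>
            (card_le_card (filter_subset_filter _ hAL)).trans (hstar v (mem_sdiff.1 hv).1)
      _ ≤ (100 * k ^ 2 + 1) * k := by gcongr
      _ = k * (100 * k ^ 2 + 1) := mul_comm _ _
    obtain ⟨u, hu⟩ : A.Nonempty := card_pos.1 (by omega)
    exact exists_embedsOn_compl_of_subset_neighborSet hk hfree hn hℓ
      (hPY _ (mem_image_of_mem _ hu)) ((card_le_univ Y).trans (by omega)) hSn hsparse hL (by omega)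

end Matching

section Induction

variable {H : SimpleGraph V} {C : SimpleGraph U} {S : Finset V} {k n ℓ s : ℕ}

theorem add_lt_of_le_mul_add (hk : 3 ≤ k) (hn : (10 * k) ^ 4 ≤ n) (hℓ : 64 * k ^ 2 * ℓ ≤ n)
    (hs : 2 * n ≤ (2 * k + 1) * s + 2 * k * ℓ) : k + 2 * (100 * k ^ 2) + 2 < s := by
  by_contra! hle
  have hℓ' : 2 * k * ℓ ≤ 64 * k ^ 2 * ℓ := Nat.mul_le_mul_right _ (by nlinarith)
  have hs' : (2 * k + 1) * s ≤ (2 * k + 1) * (k + 2 * (100 * k ^ 2) + 2) :=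
    Nat.mul_le_mul_left _ hle
  have hpoly : (2 * k + 1) * (k + 2 * (100 * k ^ 2) + 2) < (10 * k) ^ 4 := calc
    _ ≤ 3 * k * (300 * k ^ 2) := Nat.mul_le_mul (by omega) (by nlinarith)
    _ = 900 * k ^ 3 * 1 := by ring
    _ < 10000 * k ^ 3 * k := by gcongr <;> omega
    _ = (10 * k) ^ 4 := by ring
  omega

theorem pos_of_le_mul_add {L : ℕ} (hk : 3 ≤ k) (hn : (10 * k) ^ 4 ≤ n) (hℓ : 64 * k ^ 2 * ℓ ≤ n)
    (hs : 2 * n ≤ (2 * k + 1) * s + 2 * k * ℓ)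
    (hL : s ≤ (12 * k + 2) * L + (18 * k + 2) * ℓ) : 0 < L := by
  by_contra! hL0
  obtain rfl : L = 0 := by omega
  have hpos : 0 < (10 * k) ^ 4 := by positivity
  have hle : (2 * k + 1) * s + 2 * k * ℓ ≤ 64 * k ^ 2 * ℓ := calc
    _ ≤ (2 * k + 1) * ((12 * k + 2) * 0 + (18 * k + 2) * ℓ) + 2 * k * ℓ := by gcongr
    _ = ((2 * k + 1) * (18 * k + 2) + 2 * k) * ℓ := by ring
    _ ≤ 64 * k ^ 2 * ℓ := Nat.mul_le_mul_right _ (by nlinarith)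
  omega

theorem exists_reduction_of_isPath [Fintype U] {x y : V} {q : H.Walk x y} (hk : 3 ≤ k)
    (hodd : Odd k) (hfree : (cycleGraph k).Free C) (hcard : 2 * #S ≤ Fintype.card U + 1)
    (hconn : ConnectedOn H S) (hsum : degSum H S ≤ 2 * #S + 2 * ℓ) (hq : q.IsPath)
    (hqS : ∀ u ∈ q.support, u ∈ S ∧ degIn H S u = 2) (hlen : 3 * k ≤ q.length) :
    ∃ (H' : SimpleGraph V) (T : Finset V), #T < #S ∧ ConnectedOn H' T ∧
      degSum H' T ≤ 2 * #T + 2 * ℓ ∧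
      ∀ f, EmbedsOn H' Cᶜ T f → ∃ g, EmbedsOn H Cᶜ S g := by
  match q with
  | .nil => simp at hlen; omega
  | .cons _ .nil => simp at hlen; omega
  | .cons (v := b) hab (.cons (v := c) hbc p) =>
    have hb := hqS b (by simp)
    have hac : x ≠ c := fun h => by
      subst h
      simp [Walk.cons_isPath_iff] at hq
    have herase := card_erase_add_one hb.1
    have hsumb := degSum_erase_add (G := H) hb.1
    have hsume := degSum_sup_edge_le H (S.erase b) x c
    rw [hb.2] at hsumb
    exact ⟨H ⊔ edge x c, S.erase b, by omega,
      hconn.sup_edge_erase (hqS x (by simp)).1 hb.1 (hqS c (by simp)).1 hac hab.symm hbc hb.2,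
      by omega, fun f hf => hf.exists_of_sup_edge hk hodd hfree hq (by simpa using hqS)
        (by simpa using hlen) hcard⟩

theorem exists_reduction_of_card_le_leaves [Fintype U] [Nonempty U] (hk : 3 ≤ k) (hodd : Odd k)
    (hfree : (cycleGraph k).Free C) (hn : (10 * k) ^ 4 ≤ n) (hℓ : 64 * k ^ 2 * ℓ ≤ n)
    (hU : Fintype.card U + 1 = 2 * n) (hSn : #S ≤ n) (hS : k + 2 * (100 * k ^ 2) + 2 < #S)
    (hconn : ConnectedOn H S) (hsparse : SparseOn H S ℓ) (hne : (leaves H S).Nonempty)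
    (hL : #S ≤ (12 * k + 2) * #(leaves H S) + (18 * k + 2) * ℓ) :
    ∃ T ⊆ S, #T < #S ∧ ConnectedOn H T ∧
      ∀ f, EmbedsOn H Cᶜ T f → ∃ g, EmbedsOn H Cᶜ S g := by
  by_cases hstar : ∃ v ∈ S, 100 * k ^ 2 + 2 ≤ #{u ∈ leaves H S | H.Adj u v}
  · obtain ⟨v, hv, hstar⟩ := hstar
    obtain ⟨u, hu⟩ := card_pos.1 (Nat.zero_lt_of_lt hstar)
    obtain ⟨hu, huv⟩ := mem_filter.1 hu
    refine ⟨S.erase u, erase_subset _ _, card_erase_lt_of_mem (leaves_subset hu), ?_, fun f hf =>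
      hf.exists_of_erase_leaf hk hodd hfree hn hℓ hU hSn (by omega) hconn hsparse hL hu hv huv
        hstar⟩
    rw [← sdiff_singleton_eq_erase]
    exact hconn.sdiff (by simpa using degIn_of_mem_leaves hu)
  · push Not at hstar
    exact ⟨S \ leaves H S, sdiff_subset, card_lt_card (sdiff_ssubset leaves_subset hne),
      hconn.sdiff fun u => degIn_of_mem_leaves, fun f hf =>
        hf.exists_of_sdiff_leaves hk hodd hfree hn hℓ hU hSn (by omega) hconn hsparse hL
          fun v hv => Nat.le_of_lt_succ (hstar v hv)⟩

theorem ConnectedOn.exists_embedsOn_compl [Fintype U] [Nonempty U] (hk : 3 ≤ k) (hodd : Odd k)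
    (hfree : (cycleGraph k).Free C) (hn : (10 * k) ^ 4 ≤ n) (hℓ : 64 * k ^ 2 * ℓ ≤ n)
    (hU : Fintype.card U + 1 = 2 * n) (hSn : #S ≤ n) (hconn : ConnectedOn H S)
    (hsum : degSum H S ≤ 2 * #S + 2 * ℓ) : ∃ g, EmbedsOn H Cᶜ S g := by
  induction hm : #S using Nat.strong_induction_on generalizing H S with
  | _ m ih =>
    subst hm
    have hsparse := hconn.sparseOn hsum
    by_cases hsmall : (2 * k + 1) * #S + 2 * k * ℓ ≤ Fintype.card U
    · exact exists_embedsOn_compl_of_mul_card_le hk hfree hsparse hsmall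
    have hbig : 2 * n ≤ (2 * k + 1) * #S + 2 * k * ℓ := by omega
    have hS := add_lt_of_le_mul_add hk hn hℓ hbig
    by_cases hpath : ∃ x y, ∃ q : H.Walk x y,
        q.IsPath ∧ (∀ u ∈ q.support, u ∈ S ∧ degIn H S u = 2) ∧ 3 * k ≤ q.length
    · obtain ⟨x, y, q, hq, hqS, hlen⟩ := hpath
      obtain ⟨H', T, hTS, hT, hTsum, hext⟩ :=
        exists_reduction_of_isPath hk hodd hfree (by omega) hconn hsum hq hqS hlen
      obtain ⟨f, hf⟩ := ih _ hTS (hTS.le.trans hSn) hT hTsum rfl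
      exact hext f hf
    · push Not at hpath
      have hL : #S ≤ (12 * k + 2) * #(leaves H S) + (18 * k + 2) * ℓ := by
        convert hconn.card_le_of_forall_isPath_length_lt (q := 3 * k) (by omega) (by nlinarith)
          hsum hpath using 3 <;> ring
      obtain ⟨T, hTS, hcard, hT, hext⟩ := exists_reduction_of_card_le_leaves hk hodd hfree hn hℓ
        hU hSn hS hconn hsparse (card_pos.1 (pos_of_le_mul_add hk hn hℓ hbig hL)) hL
      obtain ⟨f, hf⟩ := ih _ hcard (hcard.le.trans hSn) hT (hsparse T hTS) rfl
      exact hext f hf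

end Induction

section Ramsey

variable {W : Type*} {H : SimpleGraph V} {k ℓ : ℕ}

theorem hasCopy_iff_isContained {G : SimpleGraph V} {C : SimpleGraph W} :
    HasCopy G C ↔ G.IsContained C :=
  ⟨fun ⟨f, hf⟩ => ⟨⟨f, hf⟩⟩, fun ⟨f⟩ => ⟨f.toHom, f.injective⟩⟩

theorem hasCopy_cycleGraph_or_hasCopy_compl [Fintype V] [DecidableRel H.Adj] (hk : 3 ≤ k)
    (hodd : Odd k) (hconn : H.Connected) (hn : (10 * k) ^ 4 ≤ Fintype.card V)
    (hℓ : 64 * k ^ 2 * ℓ ≤ Fintype.card V) (hsum : #H.edgeFinset ≤ Fintype.card V + ℓ)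
    (C : SimpleGraph (Fin (2 * Fintype.card V - 1))) :
    HasCopy (cycleGraph k) C ∨ HasCopy H Cᶜ := by
  rw [or_iff_not_imp_left, hasCopy_iff_isContained]
  intro hfree
  have hpos : 0 < Fintype.card V := lt_of_lt_of_le (by positivity) hn
  have : Nonempty (Fin (2 * Fintype.card V - 1)) := ⟨⟨0, by omega⟩⟩
  obtain ⟨g, hg⟩ := (connectedOn_univ hconn).exists_embedsOn_compl hk hodd hfree hn hℓ
    (by rw [Fintype.card_fin]; omega) le_rfl
    (by rw [degSum_univ, card_univ]; omega)
  exact hg.hasCopy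

theorem not_hasCopy_cycleGraph_comap_top {c : W → Bool} (hk : 3 ≤ k) (hodd : Odd k) :
    ¬ HasCopy (cycleGraph k) ((⊤ : SimpleGraph Bool).comap c) := by
  rintro ⟨f, -⟩
  let coloring : (cycleGraph k).Coloring Bool := Coloring.mk (c ∘ f) f.map_adj
  have hle := coloring.colorable.chromaticNumber_le
  rw [chromaticNumber_cycleGraph_of_odd k (by omega) hodd] at hle
  norm_cast at hle

theorem exists_card_le_of_hasCopy_compl_comap_top [Fintype V] [Fintype W] {c : W → Bool}
    (hconn : H.Connected) (h : HasCopy H ((⊤ : SimpleGraph Bool).comap c)ᶜ) :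
    ∃ i, Fintype.card V ≤ #{w | c w = i} := by
  obtain ⟨f, hf⟩ := h
  obtain ⟨a⟩ := hconn.nonempty
  have hadj : ∀ x y, H.Adj x y → c (f x) = c (f y) := fun x y hxy => by
    simpa using ((compl_adj _ _ _).1 (f.map_adj hxy)).2
  refine ⟨c (f a), card_le_card_of_injOn f (fun b _ => ?_) hf.injOn⟩
  by_contra hb
  obtain ⟨w⟩ := hconn.preconnected a b
  obtain ⟨d, -, hd, hd'⟩ := w.exists_boundary_dart {x | c (f x) = c (f a)} rfl (by simpa using hb)
  exact hd' ((hadj _ _ d.adj).symm.trans hd)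

theorem two_mul_card_le_of_forall_hasCopy [Fintype V] {N : ℕ} (hk : 3 ≤ k) (hodd : Odd k)
    (hconn : H.Connected)
    (h : ∀ C : SimpleGraph (Fin N), HasCopy (cycleGraph k) C ∨ HasCopy H Cᶜ) :
    2 * Fintype.card V ≤ N + 1 := by
  set c : Fin N → Bool := fun j => decide (j.1 < N / 2) with hc
  obtain ⟨i, hi⟩ := exists_card_le_of_hasCopy_compl_comap_top hconn
    ((h _).resolve_left (not_hasCopy_cycleGraph_comap_top (c := c) hk hodd))
  have hlow : #{j : Fin N | j.1 < N / 2} = min N (N / 2) := Fin.card_filter_val_lt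
  have hsplit := card_filter_add_card_filter_not (s := (univ : Finset (Fin N))) fun j => j.1 < N / 2
  rw [card_univ, Fintype.card_fin] at hsplit
  cases i <;> simp only [hc, decide_eq_true_eq, decide_eq_false_iff_not] at hi <;> omega

theorem mul_card_edgeFinset_sub_le [Fintype V] [DecidableRel H.Adj] (hk : 0 < k)
    (hV : 0 < Fintype.card V)
    (hdeg : (2 * #H.edgeFinset : ℝ) / Fintype.card V ≤ 2 * (1 + 1 / (8 * k : ℝ) ^ 2)) :
    64 * k ^ 2 * (#H.edgeFinset - Fintype.card V) ≤ Fintype.card V := by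
  have hV' : (0 : ℝ) < Fintype.card V := by exact_mod_cast hV
  have : (k : ℝ) ≠ 0 := by exact_mod_cast hk.ne'
  have hreal : (64 * k ^ 2 * #H.edgeFinset : ℝ) ≤
      64 * k ^ 2 * Fintype.card V + Fintype.card V := calc
    (64 * k ^ 2 * #H.edgeFinset : ℝ) = 32 * k ^ 2 * (2 * #H.edgeFinset) := by ring
    _ ≤ 32 * k ^ 2 * (2 * (1 + 1 / (8 * k : ℝ) ^ 2) * Fintype.card V) :=
      mul_le_mul_of_nonneg_left ((div_le_iff₀ hV').1 hdeg) (by positivity)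
    _ = 64 * k ^ 2 * Fintype.card V + Fintype.card V := by
      field_simp
      ring
  have hnat : 64 * k ^ 2 * #H.edgeFinset ≤ 64 * k ^ 2 * Fintype.card V + Fintype.card V := by
    exact_mod_cast hreal
  rw [Nat.mul_sub]
  omega

end Ramsey

end CycleRamsey

theorem stmt_13 (k : ℕ) (hk : 3 ≤ k) (hodd : Odd k) (V : Type) [Fintype V] [DecidableEq V]
    (H : SimpleGraph V) [DecidableRel H.Adj] (hconn : H.Connected)
    (hn : (10 * k) ^ 4 ≤ Fintype.card V)
    (hdeg : (2 * H.edgeFinset.card : ℝ) / Fintype.card V ≤ 2 * (1 + 1 / (8 * k : ℝ) ^ 2)) :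
    ramseyNumber (SimpleGraph.cycleGraph k) H = 2 * Fintype.card V - 1 := by
  have hpos : 0 < Fintype.card V := lt_of_lt_of_le (by positivity) hn
  have hupper (C : SimpleGraph (Fin (2 * Fintype.card V - 1))) :
      HasCopy (SimpleGraph.cycleGraph k) C ∨ HasCopy H Cᶜ :=
    CycleRamsey.hasCopy_cycleGraph_or_hasCopy_compl hk hodd hconn hn
      (CycleRamsey.mul_card_edgeFinset_sub_le (by omega) hpos hdeg) (by omega) C
  refine le_antisymm (Nat.sInf_le hupper) (le_csInf ⟨_, hupper⟩ fun N hN => ?_)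
  have hlower := CycleRamsey.two_mul_card_le_of_forall_hasCopy hk hodd hconn hN
  omega
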